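/- arXiv:2302.08879 — 3 statements merged into one kernel-verified Lean document; each statement's English description precedes it below -/
import Mathlib

section
/- Let B be a symplectic form on a 2J-dimensional vector space V over F_2 and let Φ = (φ_v)_{v∈V} be the corresponding real symplectic ETF, i.e., ⟨φ_v, φ_v⟩ = 2^J + 1 for all v and ⟨φ_{v₁}, φ_{v₂}⟩ = (−1)^{B(v₁,v₂)} for v₁ ≠ v₂. If J > 2 then bin(Φ) is empty. If J = 2 then, for any symplectic basis (v₁,v₂,v₃,v₄) of V (meaning B(v₁,v₂) = B(v₃,v₄) = 1 and B(v_i,v_j) = 0 for all other pairs i < j), bin(Φ) consists exactly of the 16 translates v + {0, v₁, v₂, v₁+v₂+v₃, v₁+v₂+v₄, v₁+v₂+v₃+v₄} with v ∈ V; these translates are pairwise distinct and every pair of distinct points of V is contained in exactly 2 of them, so bin(Φ) forms a BIBD with parameters (V,K,Λ,R,B) = (16,6,2,6,16). -/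
open scoped BigOperators

noncomputable section

/-- ETF predicate. -/
def IsETF (𝕜 : Type*) {E ι : Type*} [RCLike 𝕜] [NormedAddCommGroup E]
    [InnerProductSpace 𝕜 E] [Fintype ι] (φ : ι → E) : Prop :=
  (∃ S : ℝ, 0 < S ∧ ∀ n, (inner 𝕜 (φ n) (φ n) : 𝕜) = (S : 𝕜)) ∧
  (∃ C : ℝ, 0 < C ∧ ∀ n₁ n₂, n₁ ≠ n₂ → ‖(inner 𝕜 (φ n₁) (φ n₂) : 𝕜)‖ = C) ∧
  (∃ A : ℝ, 0 < A ∧ ∀ n₁ n₃,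
      (∑ n₂, (inner 𝕜 (φ n₁) (φ n₂) : 𝕜) * (inner 𝕜 (φ n₂) (φ n₃) : 𝕜)) =
        (A : 𝕜) * (inner 𝕜 (φ n₁) (φ n₃) : 𝕜))

/-- Regular simplex predicate for a subfamily. -/
def IsRegularSimplex (𝕜 : Type*) {E ι : Type*} [RCLike 𝕜] [NormedAddCommGroup E]
    [InnerProductSpace 𝕜 E] [Fintype ι] (φ : ι → E) (K : Finset ι) : Prop :=
  IsETF 𝕜 (fun k : K => φ k.1) ∧
  Module.finrank 𝕜 (Submodule.span 𝕜 (φ '' (K : Set ι))) + 1 = K.card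

/-- The binder of a family. -/
def binder (𝕜 : Type*) {E ι : Type*} [RCLike 𝕜] [NormedAddCommGroup E]
    [InnerProductSpace 𝕜 E] [Fintype ι] (φ : ι → E) : Set (Finset ι) :=
  {K | IsRegularSimplex 𝕜 φ K}

/-- A bilinear form is symplectic: alternating and nondegenerate. -/
def IsSymplectic {F V : Type*} [CommRing F] [AddCommGroup V] [Module F V]
    (B : V →ₗ[F] V →ₗ[F] F) : Prop :=
  (∀ v, B v v = 0) ∧ ∀ v : V, v ≠ 0 → ∃ w, B v w ≠ 0

/-!
Comparing traces and diagonal entries of the Gram matrix, `K ∈ bin(Φ)` forces `#K = 2 ^ J + 2` and,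
by the equality case of the triangle inequality, `⟨φ_x, φ_y⟩⟨φ_y, φ_z⟩ = -⟨φ_x, φ_z⟩` for distinct
`x, y, z ∈ K`; conversely these two conditions suffice. The second one says that
`B (x - z) (y - z) = 1`: every triangle in `K` has symplectic area `1`. Once `p, q ∈ K` are fixed,
the differences `t - p` for the other points `t ∈ K` are linearly independent, so `#K ≤ 2 * J + 2`,
and `2 * J < 2 ^ J` when `J > 2`.

If `J = 2`, additivity of the area shows that such a six-point set `L` is parallelogram-free. So two
distinct points lie in at most two translates of `L`, and since `6 * 5 = 2 * (16 - 1)` in exactly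
two. Six-point sets sharing a triangle are equal: their remaining points satisfy two affine
equations with four common solutions, one of which is the fourth vertex of a parallelogram. Given
another such set `K`, its 30 ordered pairs have 60 incidences with the 16 translates of `L`, so some
translate shares a triangle with `K` and hence equals `K`.
-/

open Finset Module
open scoped InnerProductSpace Pointwise

lemma eq_of_sum_eq_card_nsmul {E ι : Type*} [NormedAddCommGroup E] [InnerProductSpace ℝ E]
    [Fintype ι] {f : ι → E} {z : E} (hf : ∀ i, ‖f i‖ ≤ ‖z‖)
    (hsum : ∑ i, f i = Fintype.card ι • z) (i : ι) : f i = z := by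
  have hle : ∀ i ∈ univ, ⟪f i, z⟫_ℝ ≤ ‖z‖ ^ 2 := fun i _ =>
    (real_inner_le_norm _ _).trans (by nlinarith [hf i, norm_nonneg z])
  have htotal : ∑ i, ⟪f i, z⟫_ℝ = ∑ _i : ι, ‖z‖ ^ 2 := by
    rw [← sum_inner, hsum, ← Nat.cast_smul_eq_nsmul ℝ, real_inner_smul_left,
      real_inner_self_eq_norm_sq, sum_const, card_univ, nsmul_eq_mul]
  exact eq_of_norm_le_re_inner_eq_norm_sq (𝕜 := ℝ) (hf i)
    ((sum_eq_sum_iff_of_le hle).1 htotal i (mem_univ i))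

section RegularSimplices

variable {𝕜 E ι : Type*} [RCLike 𝕜] [NormedAddCommGroup E] [InnerProductSpace 𝕜 E] [Fintype ι]

lemma mul_self_eq_smul_iff_of_norm_apply_eq {M : Matrix ι ι 𝕜} {C : ℝ}
    (hM : ∀ i j, ‖M i j‖ = C) :
    M * M = (Fintype.card ι * C : 𝕜) • M ↔ ∀ i j k, M i j * M j k = C * M i k := by
  constructor
  · intro h i j k
    refine eq_of_sum_eq_card_nsmul (f := fun j => M i j * M j k) (fun j => ?_) ?_ j
    · have hC : 0 ≤ C := hM i j ▸ norm_nonneg _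
      simp [hM, abs_of_nonneg hC]
    · simpa [Matrix.mul_apply, mul_assoc] using congr_fun₂ h i k
  · intro h
    ext i k
    simp [Matrix.mul_apply, h, mul_assoc]

lemma forall_mul_eq_iff_forall_ne {ι : Type*} {M : Matrix ι ι 𝕜} {C : ℝ} (hherm : M.IsHermitian)
    (hdiag : ∀ i, M i i = C) (hnorm : ∀ i j, ‖M i j‖ = C) :
    (∀ i j k, M i j * M j k = C * M i k) ↔
      ∀ i j k, i ≠ j → i ≠ k → j ≠ k → M i j * M j k = C * M i k := by
  refine ⟨fun h i j k _ _ _ => h i j k, fun h i j k => ?_⟩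
  rcases eq_or_ne i j with rfl | hij
  · rw [hdiag]
  rcases eq_or_ne j k with rfl | hjk
  · rw [hdiag, mul_comm]
  rcases eq_or_ne i k with rfl | hik
  · rw [← hherm.apply j i, RCLike.star_def, RCLike.mul_conj, hnorm, hdiag, sq]
  · exact h i j k hij hik hjk

lemma sum_inner_smul_eq_smul_of_mem_span {φ : ι → E} {A : 𝕜}
    (hA : ∀ i k, ∑ j, ⟪φ i, φ j⟫_𝕜 * ⟪φ j, φ k⟫_𝕜 = A * ⟪φ i, φ k⟫_𝕜) {x : E}
    (hx : x ∈ Submodule.span 𝕜 (Set.range φ)) : ∑ j, ⟪φ j, x⟫_𝕜 • φ j = A • x := by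
  have hgen : ∀ k, ∑ j, ⟪φ j, φ k⟫_𝕜 • φ j = A • φ k := by
    intro k
    have horth : ∀ i, ⟪φ i, ∑ j, ⟪φ j, φ k⟫_𝕜 • φ j - A • φ k⟫_𝕜 = 0 := by
      intro i
      rw [inner_sub_right, inner_sum, inner_smul_right, ← hA, sub_eq_zero]
      exact sum_congr rfl fun j _ => by rw [inner_smul_right, mul_comm]
    rw [← sub_eq_zero, ← inner_self_eq_zero (𝕜 := 𝕜)]
    nth_rw 1 [inner_sub_left, sum_inner]
    simp only [inner_smul_left, horth, mul_zero, sum_const_zero, sub_zero]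
  induction hx using Submodule.span_induction with
  | mem _ h => obtain ⟨k, rfl⟩ := h; exact hgen k
  | zero => simp
  | add x y _ _ hx hy => simp only [inner_add_right, add_smul, sum_add_distrib, hx, hy, smul_add]
  | smul c x _ hx => simp only [inner_smul_right, mul_smul, ← smul_sum, hx, smul_comm A c]

lemma mul_finrank_span_eq_sum_inner_self {φ : ι → E} {A : 𝕜}
    (hA : ∀ i k, ∑ j, ⟪φ i, φ j⟫_𝕜 * ⟪φ j, φ k⟫_𝕜 = A * ⟪φ i, φ k⟫_𝕜) :
    A * finrank 𝕜 (Submodule.span 𝕜 (Set.range φ)) = ∑ i, ⟪φ i, φ i⟫_𝕜 := by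
  set W := Submodule.span 𝕜 (Set.range φ)
  have : Module.Finite 𝕜 W := .span_of_finite 𝕜 (Set.finite_range φ)
  let ψ : ι → W := fun i => ⟨φ i, Submodule.subset_span (Set.mem_range_self i)⟩
  have hframe : ∑ j, (innerSL 𝕜 (ψ j)).toLinearMap.smulRight (ψ j) = A • LinearMap.id := by
    ext x
    simpa [ψ] using sum_inner_smul_eq_smul_of_mem_span hA x.2
  rw [← smul_eq_mul, ← LinearMap.trace_id, ← map_smul, ← hframe, map_sum]
  exact sum_congr rfl fun i _ => LinearMap.trace_smulRight _ _

lemma smul_one_sub_mul_self_eq_iff {R : Type*} [Ring R] [Algebra 𝕜 R] (A : 𝕜) (G : R) :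
    (A • 1 - G) * (A • 1 - G) = A • (A • 1 - G) ↔ G * G = A • G := by
  have hdiff : (A • 1 - G) * (A • 1 - G) - A • (A • 1 - G) = G * G - A • G := by
    simp only [sub_mul, mul_sub, smul_mul_assoc, mul_smul_comm, one_mul, mul_one, smul_sub]
    abel
  rw [← sub_eq_zero, hdiff, sub_eq_zero]

variable {φ : ι → E} {S C : ℝ}

/- If `G` is the Gram matrix then all entries of `M = (S + C) - G` have modulus `C`, so the sum
defining an entry of `M * M = (S + C) • M` attains equality in the triangle inequality. -/
theorem tight_iff_inner_mul_inner_eq (hself : ∀ i, ⟪φ i, φ i⟫_𝕜 = S) (hC : 0 < C)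
    (hne : ∀ i j, i ≠ j → ‖⟪φ i, φ j⟫_𝕜‖ = C) (hcard : Fintype.card ι * C = S + C) :
    (∀ i k, ∑ j, ⟪φ i, φ j⟫_𝕜 * ⟪φ j, φ k⟫_𝕜 = ((S + C : ℝ) : 𝕜) * ⟪φ i, φ k⟫_𝕜) ↔
      ∀ i j k, i ≠ j → i ≠ k → j ≠ k →
        ⟪φ i, φ j⟫_𝕜 * ⟪φ j, φ k⟫_𝕜 = -(C * ⟪φ i, φ k⟫_𝕜) := by
  classical
  set M := ((S + C : ℝ) : 𝕜) • 1 - Matrix.gram 𝕜 φ with hM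
  have hdiag : ∀ i, M i i = C := fun i => by
    simp [hM, hself, -inner_self_eq_norm_sq_to_K]
  have hoff : ∀ i j, i ≠ j → M i j = -⟪φ i, φ j⟫_𝕜 := fun i j hij => by simp [hM, hij]
  have hnorm : ∀ i j, ‖M i j‖ = C := by
    intro i j
    rcases eq_or_ne i j with rfl | hij
    · simp [hdiag, hC.le]
    · simp [hoff, hij, hne]
  have hherm : M.IsHermitian := by
    refine Matrix.IsHermitian.sub ?_ (Matrix.isHermitian_gram 𝕜 φ)
    simp [Matrix.IsHermitian, Matrix.conjTranspose_smul]
  have hcard' : (Fintype.card ι * C : 𝕜) = (S + C : ℝ) := by simp [← hcard]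
  trans M * M = ((S + C : ℝ) : 𝕜) • M
  · simp only [hM, smul_one_sub_mul_self_eq_iff, ← Matrix.ext_iff, Matrix.mul_apply,
      Matrix.gram_apply, Matrix.smul_apply, smul_eq_mul]
  · rw [← hcard', mul_self_eq_smul_iff_of_norm_apply_eq hnorm,
      forall_mul_eq_iff_forall_ne hherm hdiag hnorm]
    refine forall₃_congr fun i j k => forall₃_congr fun hij hik hjk => ?_
    rw [hoff i j hij, hoff j k hjk, hoff i k hik, neg_mul_neg, mul_neg]

lemma mul_eq_sq_add_of_tight {A : ℝ} (hself : ∀ i, ⟪φ i, φ i⟫_𝕜 = S)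
    (hne : ∀ i j, i ≠ j → ‖⟪φ i, φ j⟫_𝕜‖ = C)
    (hA : ∀ i k, ∑ j, ⟪φ i, φ j⟫_𝕜 * ⟪φ j, φ k⟫_𝕜 = (A : 𝕜) * ⟪φ i, φ k⟫_𝕜) (i : ι) :
    A * S = S ^ 2 + (Fintype.card ι - 1) * C ^ 2 := by
  classical
  have hterm : ∀ j ∈ univ.erase i, ⟪φ i, φ j⟫_𝕜 * ⟪φ j, φ i⟫_𝕜 = (C ^ 2 : ℝ) := by
    intro j hj
    rw [← inner_conj_symm (φ j), RCLike.mul_conj, hne i j (ne_of_mem_erase hj).symm,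
      RCLike.ofReal_pow]
  have hsum := hA i i
  rw [← add_sum_erase _ _ (mem_univ i), sum_congr rfl hterm, hself, sum_const,
    card_erase_of_mem (mem_univ i), card_univ, nsmul_eq_mul,
    Nat.cast_pred (Fintype.card_pos_iff.2 ⟨i⟩)] at hsum
  have hsum' : S * S + (Fintype.card ι - 1) * C ^ 2 = A * S := by exact_mod_cast hsum
  rw [← hsum', sq S]

lemma card_mul_eq_of_tight_of_finrank {A : ℝ} (hS : 0 < S) (hC : 0 < C)
    (hself : ∀ i, ⟪φ i, φ i⟫_𝕜 = S) (hne : ∀ i j, i ≠ j → ‖⟪φ i, φ j⟫_𝕜‖ = C)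
    (hA : ∀ i k, ∑ j, ⟪φ i, φ j⟫_𝕜 * ⟪φ j, φ k⟫_𝕜 = (A : 𝕜) * ⟪φ i, φ k⟫_𝕜)
    (hrank : finrank 𝕜 (Submodule.span 𝕜 (Set.range φ)) + 1 = Fintype.card ι) :
    Fintype.card ι * C = S + C ∧ A = S + C := by
  obtain ⟨i⟩ : Nonempty ι := Fintype.card_pos_iff.1 (by omega)
  set r := finrank 𝕜 (Submodule.span 𝕜 (Set.range φ))
  have hentry := mul_eq_sq_add_of_tight hself hne hA i
  have htrace : A * r = (r + 1) * S := by
    have h := mul_finrank_span_eq_sum_inner_self hA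
    simp only [hself, sum_const, card_univ, ← hrank, nsmul_eq_mul] at h
    exact_mod_cast h
  rw [← hrank] at hentry ⊢
  push_cast at hentry ⊢
  have hr : (r : ℝ) ≠ 0 := by
    intro h0
    rw [h0] at htrace
    linarith
  have hSr : S = r * C := by
    rw [← sq_eq_sq₀ hS.le (by positivity)]
    linear_combination r * hentry - S * htrace
  refine ⟨by rw [hSr]; ring, mul_right_cancel₀ hr ?_⟩
  rw [htrace, hSr]
  ring

theorem isETF_and_finrank_add_one_iff (hS : 0 < S) (hC : 0 < C)
    (hself : ∀ i, ⟪φ i, φ i⟫_𝕜 = S) (hne : ∀ i j, i ≠ j → ‖⟪φ i, φ j⟫_𝕜‖ = C) :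
    IsETF 𝕜 φ ∧ finrank 𝕜 (Submodule.span 𝕜 (Set.range φ)) + 1 = Fintype.card ι ↔
      Fintype.card ι * C = S + C ∧ ∀ i j k, i ≠ j → i ≠ k → j ≠ k →
        ⟪φ i, φ j⟫_𝕜 * ⟪φ j, φ k⟫_𝕜 = -(C * ⟪φ i, φ k⟫_𝕜) := by
  constructor
  · rintro ⟨⟨-, -, A, -, hA⟩, hrank⟩
    obtain ⟨hcard, rfl⟩ := card_mul_eq_of_tight_of_finrank hS hC hself hne hA hrank
    exact ⟨hcard, (tight_iff_inner_mul_inner_eq hself hC hne hcard).1 hA⟩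
  · rintro ⟨hcard, htriple⟩
    have hA := (tight_iff_inner_mul_inner_eq hself hC hne hcard).2 htriple
    refine ⟨⟨⟨S, hS, hself⟩, ⟨C, hC, hne⟩, ⟨S + C, by positivity, hA⟩⟩, ?_⟩
    have htrace := mul_finrank_span_eq_sum_inner_self hA
    rw [← hcard] at htrace
    simp only [hself, sum_const, card_univ, nsmul_eq_mul] at htrace
    have htrace' : Fintype.card ι * C * finrank 𝕜 (Submodule.span 𝕜 (Set.range φ)) =
        Fintype.card ι * S := by exact_mod_cast htrace
    have hn : (Fintype.card ι : ℝ) ≠ 0 := fun h0 => by rw [h0] at hcard; linarith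
    have : (finrank 𝕜 (Submodule.span 𝕜 (Set.range φ)) + 1 : ℝ) = Fintype.card ι :=
      mul_right_cancel₀ (mul_ne_zero hn hC.ne')
        (by linear_combination htrace' - Fintype.card ι * hcard)
    exact_mod_cast this

theorem mem_binder_iff_of_inner (hS : 0 < S) (hC : 0 < C) (hself : ∀ i, ⟪φ i, φ i⟫_𝕜 = S)
    (hne : ∀ i j, i ≠ j → ‖⟪φ i, φ j⟫_𝕜‖ = C) {K : Finset ι} :
    K ∈ binder 𝕜 φ ↔
      #K * C = S + C ∧ ∀ i ∈ K, ∀ j ∈ K, ∀ k ∈ K, i ≠ j → i ≠ k → j ≠ k →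
        ⟪φ i, φ j⟫_𝕜 * ⟪φ j, φ k⟫_𝕜 = -(C * ⟪φ i, φ k⟫_𝕜) := by
  have h := isETF_and_finrank_add_one_iff (φ := fun k : K => φ k) hS hC (fun i => hself i)
    (fun i j hij => hne i j (Subtype.coe_injective.ne hij))
  have hrange : Set.range (fun k : K => φ k) = φ '' (K : Set ι) := (Set.image_eq_range _ _).symm
  rw [Fintype.card_coe, hrange] at h
  refine Iff.trans h ?_
  simp only [Subtype.forall, ne_eq, Subtype.mk.injEq]

end RegularSimplices

/-- No three distinct points of `L` complete to a parallelogram inside `L`. This bounds by two the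
number of translates of `L` through two given points. -/
def ParallelogramFree {V : Type*} [AddCommGroup V] (L : Finset V) : Prop :=
  ∀ x ∈ L, ∀ y ∈ L, ∀ z ∈ L, x ≠ y → x ≠ z → y ≠ z → x + y - z ∉ L

section Translates

variable {V : Type*} [AddCommGroup V] [DecidableEq V] {L : Finset V}

lemma mem_vadd_finset_iff_sub_mem {v x : V} : x ∈ v +ᵥ L ↔ x - v ∈ L := by
  rw [← neg_vadd_mem_iff, vadd_eq_add, neg_add_eq_sub]

lemma ParallelogramFree.vadd_injective (hL : ParallelogramFree L) (hcard : 3 ≤ #L) :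
    Function.Injective (· +ᵥ L : V → Finset V) := by
  intro v w (hvw : v +ᵥ L = w +ᵥ L)
  by_contra hne
  obtain ⟨z, hz⟩ : L.Nonempty := card_pos.1 (by lia)
  have hshift : ∀ t ∈ L, t + v - w ∈ L := fun t ht => by
    rw [← mem_vadd_finset_iff_sub_mem, ← hvw, mem_vadd_finset_iff_sub_mem, add_sub_cancel_right]
    exact ht
  obtain ⟨y, hyL, hy⟩ : ∃ y ∈ L, y ∉ ({z, z + v - w} : Finset V) :=
    exists_mem_notMem_of_card_lt_card (card_le_two.trans_lt hcard)
  simp only [mem_insert, mem_singleton, not_or] at hy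
  refine hL y hyL _ (hshift z hz) z hz hy.2 hy.1 ?_ ?_
  · rwa [ne_eq, add_sub_assoc, add_eq_left, sub_eq_zero]
  · convert hshift y hyL using 1
    abel

variable [Fintype V]

lemma sum_card_offDiag_inter_vadd (K L : Finset V) :
    ∑ v : V, #(K ∩ (v +ᵥ L)).offDiag =
      ∑ p ∈ K.offDiag, #{v : V | p.1 ∈ v +ᵥ L ∧ p.2 ∈ v +ᵥ L} := by
  refine .trans (sum_congr rfl fun v _ => congrArg card ?_)
    (sum_card_bipartiteAbove_eq_sum_card_bipartiteBelow
      fun (v : V) (p : V × V) => p.1 ∈ v +ᵥ L ∧ p.2 ∈ v +ᵥ L)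
  ext p
  simp only [mem_offDiag, mem_inter, mem_bipartiteAbove]
  tauto

namespace ParallelogramFree

lemma card_filter_mem_vadd_le_two (hL : ParallelogramFree L) {x y : V} (hxy : x ≠ y) :
    #{v : V | x ∈ v +ᵥ L ∧ y ∈ v +ᵥ L} ≤ 2 := by
  simp only [mem_vadd_finset_iff_sub_mem]
  rcases eq_empty_or_nonempty {v : V | x - v ∈ L ∧ y - v ∈ L} with h | ⟨v, hv⟩
  · simp [h]
  refine (card_le_card (t := {v, v + y - x}) fun w hw => ?_).trans card_le_two
  rw [mem_filter_univ] at hv hw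
  rw [mem_insert, mem_singleton]
  by_contra! h
  refine hL (x - v) hv.1 (y - w) hw.2 (y - v) hv.2 (fun heq => h.2 ?_)
    (sub_left_injective.ne hxy) (sub_right_injective.ne h.1) ?_
  · rw [eq_sub_iff_add_eq, add_comm w, sub_eq_sub_iff_add_eq_add.1 heq, add_comm]
  · convert hw.1 using 1
    abel

lemma card_filter_mem_vadd_eq_two (hL : ParallelogramFree L)
    (hcard : #L * (#L - 1) = 2 * (Fintype.card V - 1)) {x y : V} (hxy : x ≠ y) :
    #{v : V | x ∈ v +ᵥ L ∧ y ∈ v +ᵥ L} = 2 := by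
  have hle : ∀ p ∈ (univ : Finset V).offDiag, #{v : V | p.1 ∈ v +ᵥ L ∧ p.2 ∈ v +ᵥ L} ≤ 2 :=
    fun p hp => hL.card_filter_mem_vadd_le_two (mem_offDiag.1 hp).2.2
  have htotal : ∑ p ∈ (univ : Finset V).offDiag, #{v : V | p.1 ∈ v +ᵥ L ∧ p.2 ∈ v +ᵥ L} =
      ∑ p ∈ (univ : Finset V).offDiag, 2 := by
    rw [← sum_card_offDiag_inter_vadd]
    simp only [univ_inter, offDiag_card, card_vadd_finset, sum_const, card_univ, smul_eq_mul,
      ← Nat.mul_sub_one, hcard]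
    ring
  exact (sum_eq_sum_iff_of_le hle).1 htotal (x, y) (by simpa using hxy)

end ParallelogramFree

end Translates

/-- Every triangle with vertices in `K` has symplectic area `1`, the area of the triangle `xyz`
being `B (x - z) (y - z)`. For a real symplectic ETF these are the sets whose triple products have
the signs of a regular simplex. -/
def HasUnitTriangles {R V : Type*} [CommRing R] [AddCommGroup V] [Module R V]
    (B : V →ₗ[R] V →ₗ[R] R) (K : Finset V) : Prop :=
  ∀ x ∈ K, ∀ y ∈ K, ∀ z ∈ K, x ≠ y → x ≠ z → y ≠ z → B (x - z) (y - z) = 1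

section UnitTriangles

variable {R V : Type*} [CommRing R] [AddCommGroup V] [Module R V] {B : V →ₗ[R] V →ₗ[R] R}
  {K L : Finset V}

lemma linearIndependent_of_apply_eq_one {ι : Type*} {e : ι → V} {f : V}
    (hself : ∀ i, B (e i) (e i) = 0) (hne : ∀ i j, i ≠ j → B (e i) (e j) = 1)
    (hf : ∀ i, B f (e i) = 1) : LinearIndependent R e := by
  classical
  rw [linearIndependent_iff']
  intro s c hc i hi
  have hsum : ∑ j ∈ s, c j = 0 := by simpa [hf] using congrArg (B f) hc
  have hsum_erase : ∑ j ∈ s.erase i, c j = 0 := by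
    have h := congrArg (B (e i)) hc
    rw [map_zero, map_sum, ← add_sum_erase _ _ hi] at h
    simp only [map_smul, hself, smul_zero, zero_add] at h
    rw [← h]
    exact sum_congr rfl fun j hj => by simp [hne i j (ne_of_mem_erase hj).symm]
  rwa [← add_sum_erase _ _ hi, hsum_erase, add_zero] at hsum

lemma card_sq_mul_card_filter_le [Fintype R] [DecidableEq R] [Fintype V] (hB : B.IsAlt) {e f : V}
    (hef : B e f = 1) (a b : R) :
    Fintype.card R ^ 2 * #{z | B e z = a ∧ B f z = b} ≤ Fintype.card V := by
  classical
  have hfe : B f e = -1 := by rw [← hB.neg, hef]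
  rw [sq, ← Fintype.card_prod, ← card_univ, ← card_product, ← card_univ]
  refine card_le_card_of_injOn (fun t => t.2 + t.1.1 • f + t.1.2 • e) (by simp) ?_
  rintro ⟨⟨c, d⟩, z⟩ ht ⟨⟨c', d'⟩, z'⟩ ht' heq
  simp only [coe_product, Set.mem_prod, mem_coe, mem_filter_univ] at ht ht' heq
  have hc : c = c' := by
    simpa [hB.self_eq_zero, hef, ht.2.1, ht'.2.1] using congrArg (B e) heq
  have hd : d = d' := by
    simpa [hB.self_eq_zero, hfe, ht.2.2, ht'.2.2] using congrArg (B f) heq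
  subst hc hd
  simpa using heq

namespace HasUnitTriangles

lemma vadd [DecidableEq V] (hK : HasUnitTriangles B K) (v : V) :
    HasUnitTriangles B (v +ᵥ K) := by
  simp only [HasUnitTriangles, mem_vadd_finset_iff_sub_mem]
  intro x hx y hy z hz hxy hxz hyz
  simpa using hK _ hx _ hy _ hz (sub_left_injective.ne hxy) (sub_left_injective.ne hxz)
    (sub_left_injective.ne hyz)

theorem card_le_finrank_add_two [StrongRankCondition R] [Module.Finite R V] (hB : B.IsAlt)
    (hK : HasUnitTriangles B K) : #K ≤ finrank R V + 2 := by
  classical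
  rcases lt_or_ge 1 #K with hcard | hcard
  · obtain ⟨p, hp, q, hq, hpq⟩ := one_lt_card.1 hcard
    let e : (K.erase p).erase q → V := fun t => t - p
    have he : LinearIndependent R e := by
      refine linearIndependent_of_apply_eq_one (B := B) (f := q - p) (fun t => hB _) ?_ ?_
      · rintro ⟨s, hs⟩ ⟨t, ht⟩ hst
        simp only [mem_erase] at hs ht
        exact hK s hs.2.2 t ht.2.2 p hp (by simpa using hst) hs.2.1 ht.2.1
      · rintro ⟨t, ht⟩
        simp only [mem_erase] at ht
        exact hK q hq t ht.2.2 p hp ht.1.symm hpq.symm ht.2.1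
    have h := he.fintype_card_le_finrank
    rw [Fintype.card_coe, card_erase_of_mem (mem_erase.2 ⟨hpq.symm, hq⟩), card_erase_of_mem hp] at h
    lia
  · lia

lemma parallelogramFree (hB : B.IsAlt) (hK : HasUnitTriangles B K)
    (hcard : 5 ≤ #K) : ParallelogramFree K := by
  classical
  intro x hx y hy z hz hxy hxz hyz ht
  have : Nontrivial V := ⟨x, y, hxy⟩
  have : Nontrivial R := Module.nontrivial R V
  rcases eq_or_ne (x + y - z) z with htz | _
  · have hneg : y - z = -(x - z) := by
      rw [neg_sub, sub_eq_sub_iff_add_eq_add, add_comm, sub_eq_iff_eq_add.1 htz]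
    have harea := hK x hx y hy z hz hxy hxz hyz
    rw [hneg, map_neg, hB, neg_zero] at harea
    exact zero_ne_one harea
  · obtain ⟨w, hw, hw'⟩ : ∃ w ∈ K, w ∉ ({x, y, z, x + y - z} : Finset V) :=
      exists_mem_notMem_of_card_lt_card (card_le_four.trans_lt hcard)
    simp only [mem_insert, mem_singleton, not_or] at hw'
    obtain ⟨hwx, hwy, hwz, hwt⟩ := hw'
    have htx : x + y - z ≠ x := by rwa [add_sub_assoc, ne_eq, add_eq_left, sub_eq_zero]
    have hsplit : x + y - z - w = (x - w) + (y - w) - (z - w) := by abel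
    have harea := hK _ ht x hx w hw htx (Ne.symm hwt) (Ne.symm hwx)
    rw [hsplit, map_sub B, map_add B, LinearMap.sub_apply, LinearMap.add_apply, hB, zero_add,
      hK y hy x hx w hw hxy.symm (Ne.symm hwy) (Ne.symm hwx),
      hK z hz x hx w hw hxz.symm (Ne.symm hwz) (Ne.symm hwx), sub_self] at harea
    exact zero_ne_one harea

variable [Fintype R] [Fintype V] [DecidableEq V]

lemma eq_union_filter_erase [DecidableEq R] (hB : B.IsAlt) (hK : HasUnitTriangles B K)
    (hcard : 5 ≤ #K) (hV : Fintype.card V ≤ Fintype.card R ^ 2 * (#K - 2)) {x y z : V}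
    (hx : x ∈ K) (hy : y ∈ K) (hz : z ∈ K) (hxy : x ≠ y) (hxz : x ≠ z) (hyz : y ≠ z) :
    K = {x, y, z} ∪
      ({t | B (x - z) (t - z) = 1 ∧ B (y - z) (t - z) = 1} : Finset V).erase (x + y - z) := by
  set T : Finset V := {t | B (x - z) (t - z) = 1 ∧ B (y - z) (t - z) = 1} with hT
  have hsub : K \ {x, y, z} ⊆ T.erase (x + y - z) := by
    intro t ht
    simp only [mem_sdiff, mem_insert, mem_singleton, not_or] at ht
    obtain ⟨htK, htx, hty, htz⟩ := ht
    rw [mem_erase, hT, mem_filter_univ]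
    exact ⟨ne_of_mem_of_not_mem htK (hK.parallelogramFree hB hcard x hx y hy z hz hxy hxz hyz),
      hK x hx t htK z hz (Ne.symm htx) hxz htz, hK y hy t htK z hz (Ne.symm hty) hyz htz⟩
  have hfourth : x + y - z ∈ T := by
    have hsplit : x + y - z - z = (x - z) + (y - z) := by abel
    rw [hT, mem_filter_univ, hsplit, map_add, map_add, hB, hB, zero_add, add_zero]
    exact ⟨hK x hx y hy z hz hxy hxz hyz, hK y hy x hx z hz hxy.symm hyz hxz⟩
  have hTcard : #T ≤ #K - 2 := by
    have h := card_sq_mul_card_filter_le hB (hK x hx y hy z hz hxy hxz hyz)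
      (1 + B (x - z) z) (1 + B (y - z) z)
    simp only [← sub_eq_iff_eq_add, ← (B _).map_sub] at h
    exact Nat.le_of_mul_le_mul_left (h.trans hV) (by positivity)
  have htriple : {x, y, z} ⊆ K := by simp [insert_subset_iff, hx, hy, hz]
  have hle : #(T.erase (x + y - z)) ≤ #(K \ {x, y, z}) := by
    rw [card_erase_of_mem hfourth, card_sdiff_of_subset htriple,
      card_eq_three.2 ⟨x, y, z, hxy, hxz, hyz, rfl⟩]
    lia
  rw [← eq_of_subset_of_card_le hsub hle, union_sdiff_of_subset htriple]

theorem eq_of_two_lt_card_inter (hB : B.IsAlt) (hK : HasUnitTriangles B K)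
    (hL : HasUnitTriangles B L) (hcard : #K = #L) (hfive : 5 ≤ #L)
    (hV : Fintype.card V ≤ Fintype.card R ^ 2 * (#L - 2)) (hinter : 2 < #(K ∩ L)) : K = L := by
  classical
  obtain ⟨x, y, z, hx, hy, hz, hxy, hxz, hyz⟩ := two_lt_card_iff.1 hinter
  rw [mem_inter] at hx hy hz
  rw [hK.eq_union_filter_erase hB (hcard ▸ hfive) (hcard ▸ hV) hx.1 hy.1 hz.1 hxy hxz hyz,
    ← hL.eq_union_filter_erase hB hfive hV hx.2 hy.2 hz.2 hxy hxz hyz]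

theorem exists_eq_vadd (hB : B.IsAlt) (hK : HasUnitTriangles B K)
    (hL : HasUnitTriangles B L) (hcard : #K = #L) (hfive : 5 ≤ #L)
    (hV : Fintype.card V ≤ Fintype.card R ^ 2 * (#L - 2))
    (hbiplane : #L * (#L - 1) = 2 * (Fintype.card V - 1)) : ∃ v : V, K = v +ᵥ L := by
  by_contra! hne : ∀ v : V, K ≠ v +ᵥ L
  have hinter : ∀ v : V, #(K ∩ (v +ᵥ L)).offDiag ≤ 2 := by
    intro v
    have hle : #(K ∩ (v +ᵥ L)) ≤ 2 := by
      by_contra! hlt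
      have hc := card_vadd_finset v L
      exact hne v <| hK.eq_of_two_lt_card_inter hB (hL.vadd v) (hcard.trans hc.symm)
        (hc ▸ hfive) (hc ▸ hV) hlt
    rw [offDiag_card, ← Nat.mul_sub_one]
    exact Nat.mul_le_mul hle (Nat.sub_le_sub_right hle 1)
  have hcount : #K * (#K - 1) * 2 ≤ Fintype.card V * 2 := calc
    #K * (#K - 1) * 2 = ∑ p ∈ K.offDiag, #{v : V | p.1 ∈ v +ᵥ L ∧ p.2 ∈ v +ᵥ L} := by
      rw [sum_congr rfl fun p hp => (hL.parallelogramFree hB hfive).card_filter_mem_vadd_eq_two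
        hbiplane (mem_offDiag.1 hp).2.2, sum_const, offDiag_card, smul_eq_mul, ← Nat.mul_sub_one]
    _ = ∑ v, #(K ∩ (v +ᵥ L)).offDiag := (sum_card_offDiag_inter_vadd K L).symm
    _ ≤ ∑ _v : V, 2 := sum_le_sum fun v _ => hinter v
    _ = Fintype.card V * 2 := by simp
  have hLV : #L ≤ Fintype.card V := card_le_univ L
  rw [hcard, hbiplane] at hcount
  lia

end HasUnitTriangles

end UnitTriangles

section CharTwo

variable {R V : Type*} [CommRing R] [CharP R 2] [AddCommGroup V] [Module R V]
  {B : V →ₗ[R] V →ₗ[R] R}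

lemma apply_comm_of_isAlt (hB : B.IsAlt) (x y : V) : B x y = B y x := by
  rw [← hB.neg, CharTwo.neg_eq]

lemma apply_sub_sub_of_isAlt (hB : B.IsAlt) (x y z : V) :
    B (x - z) (y - z) = B x y + B y z + B x z := by
  simp only [CharTwo.sub_eq_add, map_sub, LinearMap.sub_apply, hB z, add_zero,
    apply_comm_of_isAlt hB z y]

lemma hasUnitTriangles_insert_zero [DecidableEq V] (hB : B.IsAlt) {K : Finset V}
    (hK : (K : Set V).Pairwise fun x y => B x y = 1) : HasUnitTriangles B (insert 0 K) := by
  have hpair : ∀ x ∈ K, ∀ y ∈ K, x ≠ y → B x y = 1 := fun x hx y hy => hK hx hy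
  intro x hx y hy z hz hxy hxz hyz
  rw [apply_sub_sub_of_isAlt hB]
  rcases mem_insert.1 hx with rfl | hx <;> rcases mem_insert.1 hy with rfl | hy <;>
    rcases mem_insert.1 hz with rfl | hz <;>
    simp_all [CharTwo.add_self_eq_zero]

end CharTwo

section SymplecticBlock

variable {V : Type*} [AddCommGroup V] [Module (ZMod 2) V] [DecidableEq V]
  {B : V →ₗ[ZMod 2] V →ₗ[ZMod 2] ZMod 2}

/-- The block through `0` of the biplane on a four-dimensional symplectic space over `𝔽₂`,
relative to a symplectic basis `v₁, v₂, v₃, v₄`. -/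
def symplecticBlock (v₁ v₂ v₃ v₄ : V) : Finset V :=
  {0, v₁, v₂, v₁ + v₂ + v₃, v₁ + v₂ + v₄, v₁ + v₂ + v₃ + v₄}

variable {v₁ v₂ v₃ v₄ : V}

lemma hasUnitTriangles_symplecticBlock (hB : B.IsAlt) (h₁₂ : B v₁ v₂ = 1) (h₃₄ : B v₃ v₄ = 1)
    (h₁₃ : B v₁ v₃ = 0) (h₁₄ : B v₁ v₄ = 0) (h₂₃ : B v₂ v₃ = 0) (h₂₄ : B v₂ v₄ = 0) :
    HasUnitTriangles B (symplecticBlock v₁ v₂ v₃ v₄) := by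
  refine hasUnitTriangles_insert_zero hB ?_
  have hsymm := apply_comm_of_isAlt hB
  simp [Set.pairwise_insert, hB.self_eq_zero, h₁₂, h₃₄, h₁₃, h₁₄, h₂₃, h₂₄,
    hsymm v₂ v₁, hsymm v₃ v₁, hsymm v₄ v₁, hsymm v₃ v₂, hsymm v₄ v₂, hsymm v₄ v₃,
    CharTwo.add_self_eq_zero]

lemma card_symplecticBlock (hB : B.IsAlt) (h₁₂ : B v₁ v₂ = 1) (h₃₄ : B v₃ v₄ = 1)
    (h₁₃ : B v₁ v₃ = 0) (h₁₄ : B v₁ v₄ = 0) (h₂₃ : B v₂ v₃ = 0) (h₂₄ : B v₂ v₄ = 0) :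
    #(symplecticBlock v₁ v₂ v₃ v₄) = 6 := by
  have hsymm := apply_comm_of_isAlt hB
  let coords : V → ZMod 2 × ZMod 2 × ZMod 2 × ZMod 2 := fun t => (B v₁ t, B v₂ t, B v₃ t, B v₄ t)
  have himage : (symplecticBlock v₁ v₂ v₃ v₄).image coords =
      {(0, 0, 0, 0), (0, 1, 0, 0), (1, 0, 0, 0), (1, 1, 0, 1), (1, 1, 1, 0), (1, 1, 1, 1)} := by
    simp [symplecticBlock, coords, image_insert, hB.self_eq_zero, h₁₂, h₃₄, h₁₃, h₁₄, h₂₃, h₂₄,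
      hsymm v₂ v₁, hsymm v₃ v₁, hsymm v₄ v₁, hsymm v₃ v₂, hsymm v₄ v₂, hsymm v₄ v₃]
  refine card_le_six.antisymm ?_
  calc 6 = #((symplecticBlock v₁ v₂ v₃ v₄).image coords) := by rw [himage]; rfl
    _ ≤ _ := card_image_le

end SymplecticBlock

lemma neg_one_pow_val_mul_eq_neg_iff (a b c : ZMod 2) :
    (-1 : ℝ) ^ a.val * (-1) ^ b.val = -(-1) ^ c.val ↔ a + b + c = 1 := by
  fin_cases a <;> fin_cases b <;> fin_cases c <;> norm_num [ZMod.val] <;> decide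

section Binder

variable {V E : Type*} [AddCommGroup V] [Module (ZMod 2) V] [Fintype V]
  [NormedAddCommGroup E] [InnerProductSpace ℝ E]
  {B : V →ₗ[ZMod 2] V →ₗ[ZMod 2] ZMod 2} {Φ : V → E} {S : ℝ}

theorem mem_binder_iff_hasUnitTriangles (hB : B.IsAlt) (hS : 0 < S)
    (hself : ∀ v, ⟪Φ v, Φ v⟫_ℝ = S)
    (hne : ∀ v w, v ≠ w → ⟪Φ v, Φ w⟫_ℝ = (-1) ^ (B v w).val) {K : Finset V} :
    K ∈ binder ℝ Φ ↔ (#K : ℝ) = S + 1 ∧ HasUnitTriangles B K := by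
  rw [mem_binder_iff_of_inner hS one_pos hself (fun v w hvw => by simp [hne v w hvw]), mul_one,
    HasUnitTriangles]
  refine and_congr_right fun _ => ?_
  refine forall₂_congr fun x _ => forall₂_congr fun y _ => forall₂_congr fun z _ =>
    forall₃_congr fun hxy hxz hyz => ?_
  rw [hne x y hxy, hne y z hyz, hne x z hxz, RCLike.ofReal_one, one_mul,
    neg_one_pow_val_mul_eq_neg_iff, apply_sub_sub_of_isAlt hB]

theorem binder_eq_empty_of_finrank_add_one_lt (hB : B.IsAlt) (hself : ∀ v, ⟪Φ v, Φ v⟫_ℝ = S)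
    (hne : ∀ v w, v ≠ w → ⟪Φ v, Φ w⟫_ℝ = (-1) ^ (B v w).val)
    (hlt : finrank (ZMod 2) V + 1 < S) : binder ℝ Φ = ∅ := by
  refine Set.eq_empty_of_forall_notMem fun K hK => ?_
  have hS : 0 < S := lt_trans (by positivity) hlt
  obtain ⟨hcard, hunit⟩ := (mem_binder_iff_hasUnitTriangles hB hS hself hne).1 hK
  have hle : (#K : ℝ) ≤ finrank (ZMod 2) V + 2 := by
    exact_mod_cast hunit.card_le_finrank_add_two hB
  linarith

theorem mem_binder_iff_exists_eq_vadd [DecidableEq V] (hB : B.IsAlt)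
    (hself : ∀ v, ⟪Φ v, Φ v⟫_ℝ = 5)
    (hne : ∀ v w, v ≠ w → ⟪Φ v, Φ w⟫_ℝ = (-1) ^ (B v w).val) (hV : Fintype.card V = 16)
    {L : Finset V} (hL : HasUnitTriangles B L) (hcard : #L = 6) {K : Finset V} :
    K ∈ binder ℝ Φ ↔ ∃ v : V, K = v +ᵥ L := by
  have hsize : (#K : ℝ) = 5 + 1 ↔ #K = #L := by
    rw [hcard]
    norm_cast
  rw [mem_binder_iff_hasUnitTriangles hB (by norm_num) hself hne, hsize]
  constructor
  · rintro ⟨hKL, hK⟩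
    exact hK.exists_eq_vadd hB hL hKL (by lia) (by simp [hcard, hV]) (by rw [hcard, hV])
  · rintro ⟨v, rfl⟩
    exact ⟨card_vadd_finset v L, hL.vadd v⟩

end Binder

theorem binder_of_real_symplectic_ETF_general
    {V : Type*} [AddCommGroup V] [Module (ZMod 2) V] [Fintype V] [DecidableEq V]
    (B : V →ₗ[ZMod 2] V →ₗ[ZMod 2] ZMod 2) (hB : B.IsAlt)
    {E : Type*} [NormedAddCommGroup E] [InnerProductSpace ℝ E] (Φ : V → E) {S : ℝ}
    (hdiag : ∀ v, ⟪Φ v, Φ v⟫_ℝ = S)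
    (hoff : ∀ v₁ v₂, v₁ ≠ v₂ → ⟪Φ v₁, Φ v₂⟫_ℝ = (-1) ^ (B v₁ v₂).val) :
    (finrank (ZMod 2) V + 1 < S → binder ℝ Φ = ∅) ∧
    (finrank (ZMod 2) V = 4 → S = 5 → ∀ v₁ v₂ v₃ v₄ : V,
      B v₁ v₂ = 1 → B v₃ v₄ = 1 →
      B v₁ v₃ = 0 → B v₁ v₄ = 0 → B v₂ v₃ = 0 → B v₂ v₄ = 0 →
      binder ℝ Φ = {K | ∃ v : V, K = v +ᵥ symplecticBlock v₁ v₂ v₃ v₄} ∧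
      (∀ v w : V, v +ᵥ symplecticBlock v₁ v₂ v₃ v₄ = w +ᵥ symplecticBlock v₁ v₂ v₃ v₄ → v = w) ∧
      Fintype.card V = 16 ∧
      (∀ v : V, #(v +ᵥ symplecticBlock v₁ v₂ v₃ v₄) = 6) ∧
      (∀ x y : V, x ≠ y → #{v : V | x ∈ v +ᵥ symplecticBlock v₁ v₂ v₃ v₄ ∧
        y ∈ v +ᵥ symplecticBlock v₁ v₂ v₃ v₄} = 2)) := by
  refine ⟨binder_eq_empty_of_finrank_add_one_lt hB hdiag hoff, ?_⟩
  rintro hdim rfl v₁ v₂ v₃ v₄ h₁₂ h₃₄ h₁₃ h₁₄ h₂₃ h₂₄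
  set L := symplecticBlock v₁ v₂ v₃ v₄
  have hunit : HasUnitTriangles B L :=
    hasUnitTriangles_symplecticBlock hB h₁₂ h₃₄ h₁₃ h₁₄ h₂₃ h₂₄
  have hcard : #L = 6 := card_symplecticBlock hB h₁₂ h₃₄ h₁₃ h₁₄ h₂₃ h₂₄
  have hV : Fintype.card V = 16 := by
    rw [Module.card_eq_pow_finrank (K := ZMod 2), hdim, ZMod.card]; norm_num
  have hfree : ParallelogramFree L := hunit.parallelogramFree hB (by lia)
  have hbiplane : #L * (#L - 1) = 2 * (Fintype.card V - 1) := by rw [hcard, hV]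
  exact ⟨Set.ext fun K => mem_binder_iff_exists_eq_vadd hB hdiag hoff hV hunit hcard,
    fun v w h => hfree.vadd_injective (by lia) h, hV,
    fun v => (card_vadd_finset v L).trans hcard,
    fun x y hxy => hfree.card_filter_mem_vadd_eq_two hbiplane hxy⟩

lemma two_mul_lt_two_pow {n : ℕ} (hn : 2 < n) : 2 * n < 2 ^ n := by
  induction n, hn using Nat.le_induction with
  | base => norm_num
  | succ n _ ih => rw [pow_succ]; lia

/-- The binder of the real symplectic ETF over `F₂` is empty when
`J > 2`; when `J = 2` it consists exactly of the 16 translates of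
`{0, v₁, v₂, v₁+v₂+v₃, v₁+v₂+v₄, v₁+v₂+v₃+v₄}` for any symplectic basis
`(v₁,v₂,v₃,v₄)`, these translates are pairwise distinct, and every pair of
distinct points lies in exactly 2 of them, so the binder forms a BIBD with
parameters `(16,6,2,6,16)`. -/
theorem binder_of_real_symplectic_ETF
    {J : ℕ} (hJ : 0 < J)
    {V : Type*} [AddCommGroup V] [Module (ZMod 2) V] [Fintype V] [DecidableEq V]
    (hdim : Module.finrank (ZMod 2) V = 2 * J)
    (B : V →ₗ[ZMod 2] V →ₗ[ZMod 2] ZMod 2) (hB : IsSymplectic B)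
    {E : Type*} [NormedAddCommGroup E] [InnerProductSpace ℝ E]
    (Φ : V → E)
    (hdiag : ∀ v, (inner ℝ (Φ v) (Φ v) : ℝ) = 2 ^ J + 1)
    (hoff : ∀ v₁ v₂ : V, v₁ ≠ v₂ →
      (inner ℝ (Φ v₁) (Φ v₂) : ℝ) = (-1 : ℝ) ^ (B v₁ v₂).val) :
    (2 < J → binder ℝ Φ = ∅) ∧
    (J = 2 → ∀ v₁ v₂ v₃ v₄ : V,
      B v₁ v₂ = 1 → B v₃ v₄ = 1 →
      B v₁ v₃ = 0 → B v₁ v₄ = 0 → B v₂ v₃ = 0 → B v₂ v₄ = 0 →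
      (binder ℝ Φ = {K : Finset V | ∃ v : V,
        K = ({0, v₁, v₂, v₁ + v₂ + v₃, v₁ + v₂ + v₄, v₁ + v₂ + v₃ + v₄} : Finset V).image
              (fun s => v + s)}) ∧
      (∀ v w : V,
        ({0, v₁, v₂, v₁ + v₂ + v₃, v₁ + v₂ + v₄, v₁ + v₂ + v₃ + v₄} : Finset V).image
            (fun s => v + s) =
          ({0, v₁, v₂, v₁ + v₂ + v₃, v₁ + v₂ + v₄, v₁ + v₂ + v₃ + v₄} : Finset V).image
            (fun s => w + s) → v = w) ∧
      Fintype.card V = 16 ∧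
      (∀ v : V,
        (({0, v₁, v₂, v₁ + v₂ + v₃, v₁ + v₂ + v₄, v₁ + v₂ + v₃ + v₄} : Finset V).image
          (fun s => v + s)).card = 6) ∧
      (∀ x y : V, x ≠ y →
        (Finset.univ.filter (fun v : V =>
          x ∈ ({0, v₁, v₂, v₁ + v₂ + v₃, v₁ + v₂ + v₄, v₁ + v₂ + v₃ + v₄} : Finset V).image
                (fun s => v + s) ∧
          y ∈ ({0, v₁, v₂, v₁ + v₂ + v₃, v₁ + v₂ + v₄, v₁ + v₂ + v₃ + v₄} : Finset V).image
                (fun s => v + s))).card = 2)) := by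
  have h := binder_of_real_symplectic_ETF_general B hB.1 Φ hdiag hoff
  rw [hdim] at h
  refine ⟨fun hJ => h.1 ?_, ?_⟩
  · exact_mod_cast Nat.succ_lt_succ (two_mul_lt_two_pow hJ)
  · rintro rfl
    -- `v +ᵥ L` unfolds to `L.image (fun s => v + s)`.
    exact h.2 rfl (by norm_num)
end
end

section
/- Let B be a symplectic form on a 2J-dimensional vector space V over F_2 with J ≥ 2, and let D ⊆ V be an affine quadric with #D = 2^{J−1}(2^J+1), so #(V∖D) = 2^{J−1}(2^J−1). Define the real symmetric matrix G, with rows and columns indexed by V∖D, by G(v,v) = 2^J + 1 and G(v₁,v₂) = (−1)^{B(v₁,v₂)} for v₁ ≠ v₂ (the exponent being the value of B in F_2 = {0,1}). Then G² = 3·2^{J−1}·G; consequently G is positive semidefinite of rank (2^{2J}−1)/3, and G is the Gram matrix of an ETF of 2^{J−1}(2^J−1) vectors for a real inner product space of dimension (2^{2J}−1)/3. -/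
open scoped BigOperators

noncomputable section

/-- `Q` is a quadratic form yielding the bilinear form `B` over `F₂`. -/
def YieldsForm {V : Type*} [AddCommGroup V] [Module (ZMod 2) V]
    (B : V →ₗ[ZMod 2] V →ₗ[ZMod 2] ZMod 2) (Q : V → ZMod 2) : Prop :=
  ∀ v₁ v₂ : V, Q (v₁ + v₂) + Q v₁ + Q v₂ = B v₁ v₂

/-- The quadric of a quadratic form: its set of zeros. -/
def quadric {V : Type*} (Q : V → ZMod 2) : Set V := {v | Q v = 0}

/-- A subset is an affine quadric if it or its complement is the quadric of
some quadratic form yielding `B`. -/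
def IsAffineQuadric {V : Type*} [AddCommGroup V] [Module (ZMod 2) V]
    (B : V →ₗ[ZMod 2] V →ₗ[ZMod 2] ZMod 2) (D : Set V) : Prop :=
  ∃ Q : V → ZMod 2, YieldsForm B Q ∧ (D = quadric Q ∨ D = (quadric Q)ᶜ)

/-!
`D` is the zero set of `q = Q + c`, with `Q` a quadratic form yielding `B` and `c` a constant.
Put `s = #D - #Dᶜ = ∑ w, (-1) ^ q w`. Translating by `x + y` gives
`∑ w, (-1) ^ (q w + B (x + y) w) = (-1) ^ (q (x + y) + q 0) * s`, and for `x, y ∉ D` the sign on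
the right is `(-1) ^ B x y`. Hence the matrix `K = ((-1) ^ B x y)` on `Dᶜ` satisfies
`2 K² = s² - s K`, that is `(K + s) (2 K - s) = 0`, so `G = K + s` is `3 s / 2` times an orthogonal
projection, whose rank can be read off from its trace.
-/

section MatrixSquare

variable {n R : Type*} [Fintype n] [Field R]

lemma rank_eq_trace_of_isIdempotentElem {P : Matrix n n R} (hP : IsIdempotentElem P) :
    (P.rank : R) = P.trace := by
  classical
  have hProj : LinearMap.IsProj (LinearMap.range P.toLin') P.toLin' :=
    LinearMap.IsIdempotentElem.isProj_range _ (hP.map Matrix.toLinAlgEquiv')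
  rw [← Matrix.trace_toLin'_eq, hProj.trace, Matrix.toLin'_apply', Matrix.rank]

lemma mul_rank_eq_trace_of_mul_self_eq_smul {G : Matrix n n R} {a : R}
    (ha : a ≠ 0) (hG : G * G = a • G) : a * G.rank = G.trace := by
  have hP : IsIdempotentElem (a⁻¹ • G) := by
    rw [IsIdempotentElem, smul_mul_smul_comm, hG, smul_smul, inv_mul_cancel_right₀ ha]
  have hrank : (a⁻¹ • G).rank = G.rank :=
    Matrix.rank_smul_of_mem_nonZeroDivisors _ (mem_nonZeroDivisors_of_ne_zero (inv_ne_zero ha))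
  rw [← hrank, rank_eq_trace_of_isIdempotentElem hP, Matrix.trace_smul, smul_eq_mul,
    mul_inv_cancel_left₀ ha]

lemma posSemidef_of_mul_self_eq_smul [PartialOrder R] [StarRing R] [StarOrderedRing R]
    [PosMulReflectLT R] {G : Matrix n n R} {a : R} (ha : 0 < a)
    (hG : G.IsHermitian) (hGG : G * G = a • G) : G.PosSemidef := by
  have hG_eq : G = a⁻¹ • (G.conjTranspose * G) := by
    rw [hG.eq, hGG, inv_smul_smul₀ ha.ne']
  rw [hG_eq]
  exact (Matrix.posSemidef_conjTranspose_mul_self G).smul (inv_nonneg.2 ha.le)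

end MatrixSquare

section Gram

variable {𝕜 E n : Type*} [RCLike 𝕜] [NormedAddCommGroup E] [InnerProductSpace 𝕜 E]

open scoped ComplexOrder in
lemma rank_gram [Fintype n] [FiniteDimensional 𝕜 E] (v : n → E) :
    (Matrix.gram 𝕜 v).rank = Module.finrank 𝕜 (Submodule.span 𝕜 (Set.range v)) := by
  let b := stdOrthonormalBasis 𝕜 E
  let coords : E ≃ₗ[𝕜] (Fin (Module.finrank 𝕜 E) → 𝕜) :=
    b.repr.toLinearEquiv.trans (WithLp.linearEquiv 2 𝕜 _)
  rw [Matrix.gram_eq_conjTranspose_mul b, Matrix.rank_conjTranspose_mul_self,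
    Matrix.rank_eq_finrank_span_cols, ← coords.finrank_map_eq, Submodule.map_span,
    ← Set.range_comp]
  rfl

lemma exists_gram_eq_span_eq_top [Finite n] (v : n → E) :
    ∃ φ : n → EuclideanSpace 𝕜 (Fin (Module.finrank 𝕜 (Submodule.span 𝕜 (Set.range v)))),
      Matrix.gram 𝕜 φ = Matrix.gram 𝕜 v ∧ Submodule.span 𝕜 (Set.range φ) = ⊤ := by
  set W := Submodule.span 𝕜 (Set.range v)
  have : FiniteDimensional 𝕜 W := .span_of_finite 𝕜 (Set.finite_range v)
  let w : n → W := fun i => ⟨v i, Submodule.subset_span ⟨i, rfl⟩⟩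
  have hw : Submodule.span 𝕜 (Set.range w) = ⊤ := by
    apply Submodule.map_injective_of_injective W.injective_subtype
    rw [Submodule.map_span, ← Set.range_comp, Submodule.map_subtype_top]
    rfl
  let e := (stdOrthonormalBasis 𝕜 W).repr
  refine ⟨e ∘ w, ?_, ?_⟩
  · ext i j
    simp only [Matrix.gram_apply, Function.comp_apply, LinearIsometryEquiv.inner_map_map,
      Submodule.coe_inner, w]
  · rw [Set.range_comp, ← LinearIsometryEquiv.coe_toLinearEquiv, ← LinearEquiv.coe_coe,
      Submodule.span_image, hw, Submodule.map_top, LinearEquiv.range]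

open scoped ComplexOrder MatrixOrder in
lemma exists_gram_eq_of_posSemidef [Fintype n] {G : Matrix n n 𝕜} (hG : G.PosSemidef) :
    ∃ φ : n → EuclideanSpace 𝕜 (Fin G.rank),
      Matrix.gram 𝕜 φ = G ∧ Submodule.span 𝕜 (Set.range φ) = ⊤ := by
  classical
  obtain ⟨M, hM⟩ := CStarAlgebra.nonneg_iff_eq_star_mul_self.mp hG.nonneg
  let cols : n → EuclideanSpace 𝕜 n := fun j => WithLp.toLp 2 (M.col j)
  have hcols : Matrix.gram 𝕜 cols = G :=
    (Matrix.gram_eq_conjTranspose_mul (EuclideanSpace.basisFun n 𝕜) cols).trans hM.symm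
  rw [← hcols, rank_gram]
  exact exists_gram_eq_span_eq_top cols

lemma isETF_of_gram_eq [Fintype n] {φ : n → E} {G : Matrix n n 𝕜}
    (hφ : Matrix.gram 𝕜 φ = G) {S C A : ℝ}
    (hS : 0 < S) (hdiag : ∀ i, G i i = S) (hC : 0 < C) (hoff : ∀ i j, i ≠ j → ‖G i j‖ = C)
    (hA : 0 < A) (hG : G * G = (A : 𝕜) • G) : IsETF 𝕜 φ := by
  subst hφ
  exact ⟨⟨S, hS, hdiag⟩, ⟨C, hC, hoff⟩, A, hA, fun i j => congrFun₂ hG i j⟩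

end Gram

section Sign

/-- The nontrivial character `a ↦ (-1) ^ a` of `𝔽₂`, with real values. -/
def signChar : AddChar (ZMod 2) ℝ := AddChar.zmodChar 2 (neg_one_sq (R := ℝ))

lemma signChar_one : signChar 1 = -1 := pow_one _

lemma signChar_eq_one_iff {a : ZMod 2} : signChar a = 1 ↔ a = 0 := by
  rcases (by decide : ∀ b : ZMod 2, b = 0 ∨ b = 1) a with rfl | rfl
  · simp
  · norm_num [signChar_one]

lemma abs_signChar (a : ZMod 2) : |signChar a| = 1 := abs_neg_one_pow _

end Sign

section AffineQuadratic

variable {V : Type*} [AddCommGroup V] [Module (ZMod 2) V]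
  {B : V →ₗ[ZMod 2] V →ₗ[ZMod 2] ZMod 2} {q : V → ZMod 2} {D : Finset V}

lemma IsSymplectic.separatingLeft {F W : Type*} [CommRing F] [AddCommGroup W] [Module F W]
    {ω : W →ₗ[F] W →ₗ[F] F} (hω : IsSymplectic ω) : ω.SeparatingLeft := fun v hv =>
  by_contra fun hv0 => let ⟨w, hw⟩ := hω.2 v hv0; hw (hv w)

lemma sum_signChar_apply_eq_ite [Fintype V] [DecidableEq V] (hB : B.SeparatingLeft) (z : V) :
    ∑ w, signChar (B z w) = if z = 0 then (Fintype.card V : ℝ) else 0 := by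
  let ψ : AddChar V ℝ := signChar.compAddMonoidHom (B z).toAddMonoidHom
  have hψ : ψ = 0 ↔ z = 0 := by
    refine ⟨fun h => hB z fun w => signChar_eq_one_iff.1 (DFunLike.congr_fun h w), ?_⟩
    rintro rfl
    ext w
    simp [ψ]
  classical
  simpa only [hψ] using! ψ.sum_eq_ite

/-- `q` is an affine quadratic function with polarization `B`: a constant plus a quadratic form
yielding `B`. The constant is recovered as `q 0`. Affine quadrics are the zero sets of such
functions. -/
def IsAffineQuadratic (B : V →ₗ[ZMod 2] V →ₗ[ZMod 2] ZMod 2) (q : V → ZMod 2) : Prop :=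
  ∀ x y, q (x + y) + q x + q y + q 0 = B x y

lemma IsAffineQuadric.exists_isAffineQuadratic (hD : IsAffineQuadric B (D : Set V)) :
    ∃ q, IsAffineQuadratic B q ∧ ∀ v, v ∈ D ↔ q v = 0 := by
  obtain ⟨Q, hQ, hDQ⟩ := hD
  have hQ0 : Q 0 = 0 := by simpa [CharTwo.add_self_eq_zero] using hQ 0 0
  simp only [Set.ext_iff, Finset.mem_coe] at hDQ
  rcases hDQ with hDQ | hDQ
  · exact ⟨Q, fun x y => by rw [hQ0, add_zero, hQ], hDQ⟩
  · refine ⟨fun v => Q v + 1, fun x y => ?_, fun v => ?_⟩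
    · grind [hQ x y]
    · exact (hDQ v).trans ((by decide : ∀ a : ZMod 2, ¬a = 0 ↔ a + 1 = 0) (Q v))

namespace IsAffineQuadratic

lemma apply_self (hq : IsAffineQuadratic B q) (x : V) : B x x = 0 := by
  rw [← hq, ZModModule.add_self]
  grind

lemma comm (hq : IsAffineQuadratic B q) (x y : V) : B x y = B y x := by
  rw [← hq, ← hq, add_comm y x, add_right_comm (q (x + y))]

lemma sum_signChar_mul [Fintype V] (hq : IsAffineQuadratic B q) (z : V) :
    ∑ w, signChar (q w) * signChar (B z w) = signChar (q z + q 0) * ∑ w, signChar (q w) := by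
  have hshift : ∀ w, q w + B z w = q z + q 0 + q (z + w) := fun w => by grind [hq z w]
  simp only [← AddChar.map_add_eq_mul, hshift]
  simp only [AddChar.map_add_eq_mul _ (q z + q 0), ← Finset.mul_sum]
  congr 1
  exact Equiv.sum_comp (Equiv.addLeft z) fun w => signChar (q w)

lemma sq_sum_signChar [Fintype V] (hB : B.SeparatingLeft) (hq : IsAffineQuadratic B q) :
    (∑ w, signChar (q w)) ^ 2 = Fintype.card V := by
  classical
  have hdouble : signChar (q 0) * (∑ w, signChar (q w)) ^ 2 =
      signChar (q 0) * Fintype.card V := by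
    calc signChar (q 0) * (∑ w, signChar (q w)) ^ 2
        = ∑ z, ∑ w, signChar (q w) * signChar (B z w) := by
          simp only [hq.sum_signChar_mul, AddChar.map_add_eq_mul, ← Finset.sum_mul]
          ring
      _ = ∑ w, signChar (q w) * ∑ z, signChar (B w z) := by
          rw [Finset.sum_comm]
          simp only [Finset.mul_sum, hq.comm]
      _ = signChar (q 0) * Fintype.card V := by
          simp only [sum_signChar_apply_eq_ite hB, mul_ite, mul_zero, Finset.sum_ite_eq',
            Finset.mem_univ, if_true]
  have hne : signChar (q 0) ≠ 0 := abs_ne_zero.1 (by rw [abs_signChar]; exact one_ne_zero)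
  exact mul_left_cancel₀ hne hdouble

end IsAffineQuadratic

section ZeroSet

variable {α : Type*} [Fintype α] [DecidableEq α] {f : α → ZMod 2} {E : Finset α}

lemma two_mul_sum_compl_eq (hE : ∀ a, a ∈ E ↔ f a = 0) (F : α → ℝ) :
    2 * ∑ a ∈ Eᶜ, F a = ∑ a, F a - ∑ a, signChar (f a) * F a := by
  have hterm : ∀ a, F a - signChar (f a) * F a = if a ∈ Eᶜ then 2 * F a else 0 := by
    intro a
    rcases (by decide : ∀ b : ZMod 2, b = 0 ∨ b = 1) (f a) with ha | ha
    · simp [hE, ha]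
    · simp only [ha, signChar_one, Finset.mem_compl, hE, one_ne_zero, not_false_eq_true, if_true]
      ring
  rw [← Finset.sum_sub_distrib, Finset.mul_sum]
  simp only [hterm, Finset.sum_ite_mem, Finset.univ_inter]

lemma sum_signChar_eq_card_sub_card_compl (hE : ∀ a, a ∈ E ↔ f a = 0) :
    ∑ a, signChar (f a) = (E.card : ℝ) - Eᶜ.card := by
  have hsum := two_mul_sum_compl_eq hE fun _ => 1
  have hcard : (E.card : ℝ) + Eᶜ.card = Fintype.card α := mod_cast E.card_add_card_compl
  simp only [Finset.sum_const, nsmul_eq_mul, mul_one, Finset.card_univ] at hsum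
  linarith

end ZeroSet

/-- The matrix `(-1) ^ B x y` with rows and columns indexed by `E`. -/
def signMatrix (B : V →ₗ[ZMod 2] V →ₗ[ZMod 2] ZMod 2) (E : Finset V) : Matrix E E ℝ :=
  .of fun x y => signChar (B x y)

lemma signMatrix_apply (E : Finset V) (x y : E) : signMatrix B E x y = signChar (B x y) := rfl

lemma eq_signMatrix_add_smul_one [DecidableEq V] {E : Finset V} (hB : ∀ v ∈ E, B v v = 0)
    {G : Matrix E E ℝ} {s : ℝ} (hdiag : ∀ v, G v v = s + 1)
    (hoff : ∀ v w, v ≠ w → G v w = signChar (B v w)) : G = signMatrix B E + s • 1 := by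
  ext v w
  rcases eq_or_ne v w with rfl | hvw
  · simp [signMatrix_apply, hdiag, hB v v.2, add_comm]
  · simp [signMatrix_apply, hoff v w hvw, hvw]

lemma two_smul_mul_self_add_smul_one {R A : Type*} [CommRing R] [Ring A] [Algebra R A] {K : A}
    {s : R} (hK : (2 : R) • (K * K) = s ^ 2 • 1 - s • K) :
    (2 : R) • ((K + s • 1) * (K + s • 1)) = (3 * s) • (K + s • 1) := by
  simp only [add_mul, mul_add, smul_mul_assoc, mul_smul_comm, mul_one, one_mul]
  linear_combination (norm := module) hK

namespace IsAffineQuadratic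

lemma isHermitian_signMatrix (hq : IsAffineQuadratic B q) (E : Finset V) :
    (signMatrix B E).IsHermitian := by
  ext x y
  simp only [Matrix.conjTranspose_apply, signMatrix_apply, star_trivial, hq.comm y]

lemma two_smul_signMatrix_mul_self [Fintype V] [DecidableEq V]
    (hB : B.SeparatingLeft) (hq : IsAffineQuadratic B q) (hD : ∀ v, v ∈ D ↔ q v = 0) :
    (2 : ℝ) • (signMatrix B Dᶜ * signMatrix B Dᶜ) =
      (Fintype.card V : ℝ) • 1 - ((D.card : ℝ) - Dᶜ.card) • signMatrix B Dᶜ := by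
  ext x y
  have hq_one : ∀ v : ↥Dᶜ, q v = 1 := fun v =>
    Fin.eq_one_of_ne_zero _ fun h => Finset.mem_compl.1 v.2 ((hD v).2 h)
  have hBxy : q (x + y) + q 0 = B x y := by grind [hq x y, hq_one x, hq_one y]
  have hxy : (x + y : V) = 0 ↔ x = y := by
    rw [← ZModModule.sub_eq_add, sub_eq_zero, Subtype.coe_inj]
  have hmul : (signMatrix B Dᶜ * signMatrix B Dᶜ) x y = ∑ w ∈ Dᶜ, signChar (B (x + y) w) := by
    simp only [Matrix.mul_apply, signMatrix_apply, map_add, LinearMap.add_apply,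
      AddChar.map_add_eq_mul, hq.comm y, ← Finset.sum_coe_sort Dᶜ]
  calc (2 : ℝ) * (signMatrix B Dᶜ * signMatrix B Dᶜ) x y
      = ∑ w, signChar (B (x + y) w) - ∑ w, signChar (q w) * signChar (B (x + y) w) := by
        rw [hmul, two_mul_sum_compl_eq hD]
    _ = (if x = y then (Fintype.card V : ℝ) else 0) -
          ((D.card : ℝ) - Dᶜ.card) * signChar (B x y) := by
        rw [sum_signChar_apply_eq_ite hB, hq.sum_signChar_mul, hBxy,
          sum_signChar_eq_card_sub_card_compl hD, mul_comm (signChar _)]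
        simp only [hxy]
    _ = _ := by simp [Matrix.one_apply, signMatrix_apply]

lemma signMatrix_add_smul_one_mul_self [Fintype V] [DecidableEq V] (hB : B.SeparatingLeft)
    (hq : IsAffineQuadratic B q) (hD : ∀ v, v ∈ D ↔ q v = 0) {s : ℝ}
    (hs : (D.card : ℝ) - Dᶜ.card = s) :
    (signMatrix B Dᶜ + s • 1) * (signMatrix B Dᶜ + s • 1) =
      (3 / 2 * s) • (signMatrix B Dᶜ + s • 1) := by
  have hK := hq.two_smul_signMatrix_mul_self hB hD
  rw [← hq.sq_sum_signChar hB, sum_signChar_eq_card_sub_card_compl hD, hs] at hK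
  apply smul_right_injective _ (two_ne_zero (α := ℝ))
  simp only [two_smul_mul_self_add_smul_one hK, smul_smul]
  ring_nf

lemma three_mul_rank_signMatrix_add_smul_one [Fintype V] [DecidableEq V] (hB : B.SeparatingLeft)
    (hq : IsAffineQuadratic B q) (hD : ∀ v, v ∈ D ↔ q v = 0) {s : ℝ}
    (hs : (D.card : ℝ) - Dᶜ.card = s) :
    3 * (signMatrix B Dᶜ + s • 1).rank + 1 = Fintype.card V := by
  have hsq : s ^ 2 = Fintype.card V := by
    rw [← hs, ← sum_signChar_eq_card_sub_card_compl hD, hq.sq_sum_signChar hB]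
  have hs0 : s ≠ 0 := by
    rintro rfl
    exact Fintype.card_ne_zero (α := V) (by simpa using hsq.symm)
  have hcard : (D.card : ℝ) + Dᶜ.card = Fintype.card V := mod_cast D.card_add_card_compl
  have hdiag : ∀ v, (signMatrix B Dᶜ + s • 1) v v = s + 1 := by
    intro v
    simp [signMatrix_apply, hq.apply_self, add_comm]
  have htrace : (signMatrix B Dᶜ + s • 1).trace = Dᶜ.card * (s + 1) := by
    simp only [Matrix.trace, Matrix.diag_apply, hdiag, Finset.sum_const, Finset.card_univ,
      Fintype.card_coe, nsmul_eq_mul]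
  have hrank := mul_rank_eq_trace_of_mul_self_eq_smul (by positivity)
    (hq.signMatrix_add_smul_one_mul_self hB hD hs)
  rify
  apply mul_left_cancel₀ hs0
  linear_combination 2 * hrank + 2 * htrace + (s + 1) * (hcard - hs) - hsq

end IsAffineQuadratic

end AffineQuadratic

lemma card_sub_card_compl_eq_two_pow {α : Type*} [Fintype α] [DecidableEq α] {E : Finset α}
    {J : ℕ} (hJ : J ≠ 0) (hα : Fintype.card α = 2 ^ (2 * J))
    (hE : E.card = 2 ^ (J - 1) * (2 ^ J + 1)) : (E.card : ℝ) - Eᶜ.card = 2 ^ J := by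
  have hcompl : (E.card : ℝ) + Eᶜ.card = (2 ^ J) ^ 2 := by
    rw [← pow_mul']
    exact_mod_cast E.card_add_card_compl.trans hα
  have hcard : (E.card : ℝ) = 2 ^ (J - 1) * (2 ^ J + 1) := mod_cast hE
  linear_combination 2 * hcard - hcompl + (2 ^ J + 1) * mul_pow_sub_one hJ (2 : ℝ)

/-- For an affine quadric `D` of size `2^{J−1}(2^J+1)`, the matrix
`G` indexed by `V∖D` with diagonal `2^J+1` and off-diagonal `(−1)^{B(v₁,v₂)}`
satisfies `G² = 3·2^{J−1}·G`, is positive semidefinite of rank `(2^{2J}−1)/3`,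
and is the Gram matrix of an ETF of `2^{J−1}(2^J−1)` vectors for a real space of
dimension `(2^{2J}−1)/3`. -/
theorem gram_of_symplectic_sub_ETF
    {J : ℕ} (hJ : 2 ≤ J)
    {V : Type*} [AddCommGroup V] [Module (ZMod 2) V] [Fintype V] [DecidableEq V]
    (hdim : Module.finrank (ZMod 2) V = 2 * J)
    (B : V →ₗ[ZMod 2] V →ₗ[ZMod 2] ZMod 2) (hB : IsSymplectic B)
    (D : Finset V) (hD : IsAffineQuadric B (D : Set V))
    (hDcard : D.card = 2 ^ (J - 1) * (2 ^ J + 1))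
    (G : Matrix ↥(Dᶜ) ↥(Dᶜ) ℝ)
    (hGdiag : ∀ v, G v v = 2 ^ J + 1)
    (hGoff : ∀ v₁ v₂ : ↥(Dᶜ), v₁ ≠ v₂ → G v₁ v₂ = (-1 : ℝ) ^ (B v₁.1 v₂.1).val) :
    G * G = ((3 * 2 ^ (J - 1) : ℝ)) • G ∧
    G.PosSemidef ∧
    G.rank = (2 ^ (2 * J) - 1) / 3 ∧
    ∃ φ : ↥(Dᶜ) → EuclideanSpace ℝ (Fin ((2 ^ (2 * J) - 1) / 3)),
      IsETF ℝ φ ∧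
      (∀ v₁ v₂ : ↥(Dᶜ), (inner ℝ (φ v₁) (φ v₂) : ℝ) = G v₁ v₂) ∧
      Submodule.span ℝ (Set.range φ) = ⊤ := by
  obtain ⟨q, hq, hDq⟩ := hD.exists_isAffineQuadratic
  have hV : Fintype.card V = 2 ^ (2 * J) := by
    rw [Module.card_eq_pow_finrank (K := ZMod 2), ZMod.card, hdim]
  have hs := card_sub_card_compl_eq_two_pow (by lia) hV hDcard
  have hGK := eq_signMatrix_add_smul_one (fun v _ => hB.1 v) hGdiag hGoff
  have hscale : 3 / 2 * 2 ^ J = (3 * 2 ^ (J - 1) : ℝ) := by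
    rw [← mul_pow_sub_one (by lia : J ≠ 0)]
    ring
  have hGG : G * G = (3 * 2 ^ (J - 1) : ℝ) • G := by
    rw [hGK, hq.signMatrix_add_smul_one_mul_self hB.separatingLeft hDq hs, hscale]
  have hherm : G.IsHermitian :=
    hGK ▸ (hq.isHermitian_signMatrix _).add (Matrix.isHermitian_one.smul (.all _))
  have hpsd : G.PosSemidef := posSemidef_of_mul_self_eq_smul (by positivity) hherm hGG
  have hrank : G.rank = (2 ^ (2 * J) - 1) / 3 := by
    have := hq.three_mul_rank_signMatrix_add_smul_one hB.separatingLeft hDq hs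
    rw [← hGK, hV] at this
    lia
  have hφ := exists_gram_eq_of_posSemidef hpsd
  rw [hrank] at hφ
  obtain ⟨φ, hφG, hspan⟩ := hφ
  have hnorm : ∀ v w, v ≠ w → ‖G v w‖ = 1 := fun v w hvw => by simp [hGoff v w hvw]
  have hETF : IsETF ℝ φ := isETF_of_gram_eq (S := 2 ^ J + 1) (A := 3 * 2 ^ (J - 1)) hφG
    (by positivity) hGdiag one_pos hnorm (by positivity) hGG
  exact ⟨hGG, hpsd, hrank, φ, hETF, congrFun₂ hφG, hspan⟩
end
end

section
/- Let B be a symplectic form on a 2J-dimensional vector space V over F_2 and let Q be a quadratic form yielding B of positive sign, i.e., whose quadric 𝒬 has cardinality 2^{J−1}(2^J+1). Then: (i) every Lagrangian subspace L of V has exactly one coset v + L contained in 𝒬; and (ii) every (J−1)-dimensional subspace S of V with S ⊆ 𝒬 is contained in exactly three Lagrangian subspaces of V, exactly two of which are contained in 𝒬. -/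
noncomputable section

/-- The orthogonal complement of a subset with respect to a bilinear form. -/
def sympPerp {F V : Type*} [CommRing F] [AddCommGroup V] [Module F V]
    (B : V →ₗ[F] V →ₗ[F] F) (S : Set V) : Set V :=
  {w | ∀ v ∈ S, B v w = 0}

/-- A subspace is Lagrangian if it equals its own orthogonal complement. -/
def IsLagrangian {F V : Type*} [CommRing F] [AddCommGroup V] [Module F V]
    (B : V →ₗ[F] V →ₗ[F] F) (L : Submodule F V) : Prop :=
  (L : Set V) = sympPerp B (L : Set V)

/-!
Positivity means that the quadric contains more than half of `V`. On each coset of an isotropic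
subspace `L` the form `Q` is affine, so it is either constant or vanishes on exactly half of the
coset; averaging over cosets produces one on which `Q` vanishes identically. If `Q` vanishes on
`v + L`, then `Q` agrees with `B v` on `L`, so for a Lagrangian `L` the coset is unique.

If `S` is isotropic of codimension one in a Lagrangian, then `S^⊥ / S` is a symplectic plane and the
Lagrangians through `S` correspond to its lines. When `S` lies in the quadric, a singular coset of
any of these Lagrangians contains a vector of `S^⊥` outside `S`. This singular vector completes to a
hyperbolic pair `a`, `b` with `Q a = Q b = 0` and `B a b = 1`. Then `Q (a + b) = 1`, so of the three
lines, spanned by `a`, `b` and `a + b`, exactly the first two give Lagrangians in the quadric.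
-/

section Counting

variable {G ι : Type*} [AddGroup G] [Finite G]

theorem exists_card_mul_ncard_le_card_mul_ncard_add_mem [Finite ι] (φ : ι → G) (A : Set G) :
    ∃ g, Nat.card ι * A.ncard ≤ Nat.card G * {i | g + φ i ∈ A}.ncard := by
  classical
  have := Fintype.ofFinite G
  have := Fintype.ofFinite ι
  have card_translate (i : ι) : {g | g + φ i ∈ A}.ncard = A.ncard :=
    Nat.card_congr ((Equiv.addRight (φ i)).subtypeEquiv fun _ => Iff.rfl)
  have double_count : ∑ g, {i | g + φ i ∈ A}.ncard = Nat.card ι * A.ncard := by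
    calc ∑ g, {i | g + φ i ∈ A}.ncard = ∑ i, {g | g + φ i ∈ A}.ncard := by
          simpa only [Set.ncard_eq_toFinset_card', Set.toFinset_ofPred] using!
            Finset.sum_card_bipartiteAbove_eq_sum_card_bipartiteBelow fun g i => g + φ i ∈ A
      _ = Nat.card ι * A.ncard := by simp [card_translate]
  obtain ⟨g, -, hg⟩ := Finset.exists_le_of_sum_le (s := Finset.univ)
    (f := fun _ : G => Nat.card ι * A.ncard)
    (g := fun g => Nat.card G * {i | g + φ i ∈ A}.ncard) Finset.univ_nonempty
    (by simp [← Finset.mul_sum, double_count])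
  exact ⟨g, hg⟩

theorem exists_card_lt_two_mul_ncard_add_mem [Finite ι] [Nonempty ι] (φ : ι → G) {A : Set G}
    (hA : Nat.card G < 2 * A.ncard) : ∃ g, Nat.card ι < 2 * {i | g + φ i ∈ A}.ncard := by
  obtain ⟨g, hg⟩ := exists_card_mul_ncard_le_card_mul_ncard_add_mem φ A
  refine ⟨g, lt_of_mul_lt_mul_left (a := Nat.card G) ?_ (Nat.zero_le _)⟩
  calc Nat.card G * Nat.card ι < 2 * A.ncard * Nat.card ι :=
        Nat.mul_lt_mul_of_pos_right hA Nat.card_pos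
    _ = 2 * (Nat.card ι * A.ncard) := by ring
    _ ≤ 2 * (Nat.card G * {i | g + φ i ∈ A}.ncard) := Nat.mul_le_mul_left 2 hg
    _ = Nat.card G * (2 * {i | g + φ i ∈ A}.ncard) := by ring

theorem addMonoidHom_apply_eq_of_card_lt_two_mul_ncard {H : Type*} [AddGroup H] (f : G →+ H) {c : H}
    (hc : Nat.card G < 2 * {x | f x = c}.ncard) (x : G) : f x = c := by
  have f_eq_zero (g : G) : f g = 0 := by
    have card_translate : {x | f (g + x) = c}.ncard = {x | f x = c}.ncard :=
      Nat.card_congr ((Equiv.addLeft g).subtypeEquiv fun _ => Iff.rfl)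
    obtain ⟨y, hgy, hy⟩ : ({x | f (g + x) = c} ∩ {x | f x = c}).Nonempty :=
      Set.nonempty_inter_of_lt_ncard_add_ncard (by rwa [card_translate, ← two_mul])
    exact add_eq_right.1 ((map_add f g y).symm.trans (hgy.trans hy.symm))
  obtain ⟨y, hy⟩ : {x | f x = c}.Nonempty := Set.nonempty_of_ncard_ne_zero (by lia)
  rw [f_eq_zero x, ← f_eq_zero y, hy]

end Counting

section Symplectic

variable {F V : Type*} [CommRing F] [AddCommGroup V] [Module F V]
  {B : LinearMap.BilinForm F V} {S L : Submodule F V}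

theorem isLagrangian_iff_eq_orthogonal : IsLagrangian B L ↔ L = B.orthogonal L :=
  SetLike.coe_set_eq (p := L) (q := B.orthogonal L)

theorem sup_span_singleton_le_orthogonal (hB : B.IsAlt) (hS : S ≤ B.orthogonal S) {u : V}
    (hu : u ∈ B.orthogonal S) : S ⊔ F ∙ u ≤ B.orthogonal (S ⊔ F ∙ u) := by
  intro y hy x hx
  obtain ⟨s, hs, _, hc, rfl⟩ := Submodule.mem_sup.1 hx
  obtain ⟨t, ht, _, hd, rfl⟩ := Submodule.mem_sup.1 hy
  obtain ⟨c, rfl⟩ := Submodule.mem_span_singleton.1 hc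
  obtain ⟨d, rfl⟩ := Submodule.mem_span_singleton.1 hd
  simp [hS ht s hs, hu s hs, hB.isRefl _ _ (hu t ht), hB.self_eq_zero]

theorem mem_sup_span_singleton_self (S : Submodule F V) (u : V) : u ∈ S ⊔ F ∙ u :=
  Submodule.mem_sup_right (Submodule.mem_span_singleton_self u)

namespace IsLagrangian

theorem le_orthogonal (hL : IsLagrangian B L) : L ≤ B.orthogonal L :=
  (isLagrangian_iff_eq_orthogonal.1 hL).le

theorem mem_iff (hL : IsLagrangian B L) {u : V} : u ∈ L ↔ ∀ x ∈ L, B x u = 0 :=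
  SetLike.ext_iff.1 (isLagrangian_iff_eq_orthogonal.1 hL) u

theorem eq_of_le {M : Submodule F V} (hL : IsLagrangian B L) (hM : IsLagrangian B M)
    (hLM : L ≤ M) : L = M :=
  hLM.antisymm fun _ hu => hL.mem_iff.2 fun x hx => hM.mem_iff.1 hu x (hLM hx)

theorem apply_eq_zero_of_sup_span_singleton_eq {u v : V} (hv : IsLagrangian B (S ⊔ F ∙ v))
    (h : S ⊔ F ∙ u = S ⊔ F ∙ v) : B u v = 0 :=
  hv.le_orthogonal (mem_sup_span_singleton_self S v) u (h ▸ mem_sup_span_singleton_self S u)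

end IsLagrangian

namespace IsSymplectic

theorem isAlt (hB : IsSymplectic B) : B.IsAlt := hB.1

theorem nondegenerate (hB : IsSymplectic B) : B.Nondegenerate := by
  refine hB.isAlt.isRefl.nondegenerate_iff_separatingLeft.2 fun v hv => ?_
  by_contra h
  obtain ⟨w, hw⟩ := hB.2 v h
  exact hw (hv w)

end IsSymplectic

end Symplectic

section LagrangiansOverField

variable {F V : Type*} [Field F] [AddCommGroup V] [Module F V] [FiniteDimensional F V]
  {B : LinearMap.BilinForm F V} {S L : Submodule F V}

namespace IsSymplectic

theorem exists_mem_orthogonal_apply_ne_zero (hB : IsSymplectic B) {a : V} (ha : a ∉ S) :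
    ∃ b ∈ B.orthogonal S, B a b ≠ 0 := by
  contrapose! ha
  rw [← LinearMap.BilinForm.orthogonal_orthogonal hB.nondegenerate hB.isAlt.isRefl S]
  exact fun b hb => hB.isAlt.isRefl _ _ (ha b hb)

theorem exists_mem_orthogonal_notMem (hB : IsSymplectic B)
    (hdim : 2 * (Module.finrank F S + 1) = Module.finrank F V) : ∃ a ∈ B.orthogonal S, a ∉ S := by
  by_contra! h
  have := Submodule.finrank_mono (s := B.orthogonal S) (t := S) h
  rw [LinearMap.BilinForm.finrank_orthogonal hB.nondegenerate] at this
  lia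

theorem isLagrangian_sup_span_singleton (hB : IsSymplectic B) (hS : S ≤ B.orthogonal S)
    (hdim : 2 * (Module.finrank F S + 1) = Module.finrank F V) {u : V} (hu : u ∈ B.orthogonal S)
    (huS : u ∉ S) : IsLagrangian B (S ⊔ F ∙ u) := by
  refine isLagrangian_iff_eq_orthogonal.2 <| Submodule.eq_of_le_of_finrank_le
    (sup_span_singleton_le_orthogonal hB.isAlt hS hu) ?_
  rw [LinearMap.BilinForm.finrank_orthogonal hB.nondegenerate,
    Submodule.finrank_sup_span_singleton huS]
  lia

theorem eq_sup_span_singleton (hB : IsSymplectic B) (hL : IsLagrangian B L) (hSL : S ≤ L)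
    (hdim : 2 * (Module.finrank F S + 1) = Module.finrank F V) {u : V} (hu : u ∈ L) (huS : u ∉ S) :
    L = S ⊔ F ∙ u := by
  have hS : S ≤ B.orthogonal S := fun y hy x hx => hL.mem_iff.1 (hSL hy) x (hSL hx)
  have hsup : IsLagrangian B (S ⊔ F ∙ u) :=
    hB.isLagrangian_sup_span_singleton hS hdim (fun x hx => hL.mem_iff.1 hu x (hSL hx)) huS
  exact (hsup.eq_of_le hL (by simpa using ⟨hSL, hu⟩)).symm

theorem eq_sup_span_singleton_of_apply_eq_zero (hB : IsSymplectic B) (hL : IsLagrangian B L)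
    (hSL : S ≤ L) (hdim : 2 * (Module.finrank F S + 1) = Module.finrank F V) {u v : V}
    (hu : u ∈ L) (huS : u ∉ S) (hv : v ∈ B.orthogonal S) (hvS : v ∉ S) (huv : B u v = 0) :
    L = S ⊔ F ∙ v := by
  have hvL : v ∈ L := hL.mem_iff.2 fun x hx => by
    rw [hB.eq_sup_span_singleton hL hSL hdim hu huS] at hx
    obtain ⟨s, hs, _, hc, rfl⟩ := Submodule.mem_sup.1 hx
    obtain ⟨c, rfl⟩ := Submodule.mem_span_singleton.1 hc
    simp [hv s hs, huv]
  exact hB.eq_sup_span_singleton hL hSL hdim hvL hvS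

theorem setOf_isLagrangian_ge_eq (hB : IsSymplectic B) (hS : S ≤ B.orthogonal S)
    (hdim : 2 * (Module.finrank F S + 1) = Module.finrank F V) {a b : V}
    (ha : a ∈ B.orthogonal S) (hb : b ∈ B.orthogonal S) (hab : B a b ≠ 0) :
    {L | IsLagrangian B L ∧ S ≤ L} =
      insert (S ⊔ F ∙ a) (Set.range fun c : F => S ⊔ F ∙ (b + c • a)) := by
  have haS : a ∉ S := fun h => hab (hb a h)
  have hline (c : F) : b + c • a ∈ B.orthogonal S := add_mem hb (Submodule.smul_mem _ c ha)
  have hlineS (c : F) : b + c • a ∉ S := fun h =>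
    hab (hB.isAlt.isRefl _ _ (by simpa [hB.isAlt.self_eq_zero] using ha _ h))
  refine Set.Subset.antisymm ?_ ?_
  · rintro L ⟨hL, hSL⟩
    obtain ⟨u, hu, huS⟩ : ∃ u ∈ L, u ∉ S := by
      by_contra! h
      exact haS (h a (hL.mem_iff.2 fun x hx => ha x (h x hx)))
    by_cases hua : B u a = 0
    · exact .inl (hB.eq_sup_span_singleton_of_apply_eq_zero hL hSL hdim hu huS ha haS hua)
    · have huc : B u (b + (-B u b / B u a) • a) = 0 := by simp [hua]
      exact .inr ⟨-B u b / B u a, (hB.eq_sup_span_singleton_of_apply_eq_zero hL hSL hdim hu huS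
        (hline _) (hlineS _) huc).symm⟩
  · rintro _ (rfl | ⟨c, rfl⟩)
    · exact ⟨hB.isLagrangian_sup_span_singleton hS hdim ha haS, le_sup_left⟩
    · exact ⟨hB.isLagrangian_sup_span_singleton hS hdim (hline c) (hlineS c), le_sup_left⟩

theorem ncard_setOf_isLagrangian_ge [Finite F] (hB : IsSymplectic B) (hS : S ≤ B.orthogonal S)
    (hdim : 2 * (Module.finrank F S + 1) = Module.finrank F V) :
    {L | IsLagrangian B L ∧ S ≤ L}.ncard = Nat.card F + 1 := by
  obtain ⟨a, ha, haS⟩ := hB.exists_mem_orthogonal_notMem hdim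
  obtain ⟨b, hb, hab⟩ := hB.exists_mem_orthogonal_apply_ne_zero haS
  have lagrangians_eq := hB.setOf_isLagrangian_ge_eq hS hdim ha hb hab
  have line_isLagrangian (c : F) : IsLagrangian B (S ⊔ F ∙ (b + c • a)) :=
    (lagrangians_eq.ge (.inr ⟨c, rfl⟩)).1
  have line_injective : Function.Injective fun c : F => S ⊔ F ∙ (b + c • a) := by
    intro c d h
    have hcd := (line_isLagrangian d).apply_eq_zero_of_sup_span_singleton_eq h
    have hba : B b a = -B a b := (hB.isAlt.neg_eq a b).symm
    have : (c - d) * B a b = 0 := by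
      simp only [map_add, map_smul, LinearMap.add_apply, LinearMap.smul_apply, smul_eq_mul,
        hB.isAlt.self_eq_zero, hba] at hcd
      linear_combination hcd
    exact sub_eq_zero.1 ((mul_eq_zero.1 this).resolve_right hab)
  have notMem_range : S ⊔ F ∙ a ∉ Set.range fun c : F => S ⊔ F ∙ (b + c • a) := by
    rintro ⟨c, h⟩
    have hac := (line_isLagrangian c).apply_eq_zero_of_sup_span_singleton_eq h.symm
    exact hab (by simpa [hB.isAlt.self_eq_zero] using hac)
  rw [lagrangians_eq, Set.ncard_insert_of_notMem notMem_range (Set.finite_range _),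
    Set.ncard_range_of_injective line_injective]

end IsSymplectic

end LagrangiansOverField

section QuadraticForm

open scoped Pointwise

variable {V : Type*} [AddCommGroup V] [Module (ZMod 2) V]
  {B : LinearMap.BilinForm (ZMod 2) V} {Q : V → ZMod 2} {S L : Submodule (ZMod 2) V}

theorem zmod_two_eq_one_of_ne_zero {c : ZMod 2} (hc : c ≠ 0) : c = 1 :=
  Fin.eq_one_of_ne_zero c hc

namespace YieldsForm

protected theorem map_add (hQ : YieldsForm B Q) (x y : V) : Q (x + y) = Q x + Q y + B x y := by
  linear_combination hQ x y - (Q x + Q y) * CharTwo.two_eq_zero (R := ZMod 2)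

protected theorem map_zero (hQ : YieldsForm B Q) : Q 0 = 0 := by
  simpa [CharTwo.add_self_eq_zero] using hQ 0 0

protected theorem map_smul (hQ : YieldsForm B Q) (c : ZMod 2) (x : V) : Q (c • x) = c * Q x := by
  obtain rfl | hc := eq_or_ne c 0
  · rw [zero_smul, zero_mul, hQ.map_zero]
  · rw [zmod_two_eq_one_of_ne_zero hc, one_smul, one_mul]

theorem isAlt (hQ : YieldsForm B Q) : B.IsAlt := fun x => by
  rw [← hQ x x, ZModModule.add_self, hQ.map_zero, zero_add, CharTwo.add_self_eq_zero]

theorem le_orthogonal_of_subset_quadric (hQ : YieldsForm B Q) (hS : (S : Set V) ⊆ quadric Q) :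
    S ≤ B.orthogonal S := fun y hy x hx => by
  rw [← hQ x y, hS hx, hS hy, hS (add_mem hx hy), add_zero, add_zero]

theorem vadd_subset_quadric_iff (hQ : YieldsForm B Q) {v : V} :
    v +ᵥ (L : Set V) ⊆ quadric Q ↔ Q v = 0 ∧ ∀ x ∈ L, Q x = B v x := by
  have mem_quadric (x : V) : v +ᵥ x ∈ quadric Q ↔ Q v + Q x + B v x = 0 := by
    rw [← hQ.map_add]; rfl
  simp only [Set.vadd_set_subset_iff, SetLike.mem_coe, mem_quadric]
  constructor
  · intro h
    have hQv : Q v = 0 := by simpa [hQ.map_zero] using h L.zero_mem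
    exact ⟨hQv, fun x hx => by simpa [hQv, CharTwo.add_eq_zero] using h hx⟩
  · rintro ⟨hQv, h⟩ x hx
    rw [hQv, h x hx, zero_add, CharTwo.add_self_eq_zero]

theorem sup_span_singleton_subset_quadric_iff (hQ : YieldsForm B Q) (hS : (S : Set V) ⊆ quadric Q)
    {u : V} (hu : u ∈ B.orthogonal S) :
    ((S ⊔ ZMod 2 ∙ u : Submodule (ZMod 2) V) : Set V) ⊆ quadric Q ↔ Q u = 0 := by
  refine ⟨fun h => h (mem_sup_span_singleton_self S u), fun hQu => ?_⟩
  intro x hx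
  obtain ⟨s, hs, _, hc, rfl⟩ := Submodule.mem_sup.1 hx
  obtain ⟨c, rfl⟩ := Submodule.mem_span_singleton.1 hc
  have hQs : Q s = 0 := hS hs
  change Q (s + c • u) = 0
  simp [hQ.map_add, hQ.map_smul, hQs, hQu, hu s hs]

theorem exists_vadd_subset_quadric [Finite V] (hQ : YieldsForm B Q)
    (hmaj : Nat.card V < 2 * (quadric Q).ncard) (hL : L ≤ B.orthogonal L) :
    ∃ v : V, v +ᵥ (L : Set V) ⊆ quadric Q := by
  obtain ⟨v, hv⟩ := exists_card_lt_two_mul_ncard_add_mem (Subtype.val : L → V) hmaj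
  let f : L →+ ZMod 2 := AddMonoidHom.mk' (fun x => Q x + B v x) fun x y => by
    have hxy : B x y = 0 := hL y.2 x x.2
    simp only [Submodule.coe_add, hQ.map_add, hxy, map_add]
    ring
  have mem_quadric_iff (x : L) : v + x ∈ quadric Q ↔ f x = -Q v := by
    rw [eq_neg_iff_add_eq_zero]
    change Q (v + x) = 0 ↔ Q x + B v x + Q v = 0
    rw [hQ.map_add]; ring_nf
  simp only [mem_quadric_iff] at hv
  refine ⟨v, Set.vadd_set_subset_iff.2 fun x hx => ?_⟩
  exact (mem_quadric_iff ⟨x, hx⟩).2 (addMonoidHom_apply_eq_of_card_lt_two_mul_ncard f hv ⟨x, hx⟩)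

theorem vadd_eq_of_subset_quadric (hQ : YieldsForm B Q) (hL : IsLagrangian B L) {v w : V}
    (hv : v +ᵥ (L : Set V) ⊆ quadric Q) (hw : w +ᵥ (L : Set V) ⊆ quadric Q) :
    v +ᵥ (L : Set V) = w +ᵥ (L : Set V) := by
  refine (leftAddCoset_eq_iff L.toAddSubgroup).2 (hL.mem_iff.2 fun x hx => ?_)
  have hvw : B v x = B w x :=
    ((hQ.vadd_subset_quadric_iff.1 hv).2 x hx).symm.trans ((hQ.vadd_subset_quadric_iff.1 hw).2 x hx)
  exact hQ.isAlt.isRefl _ _ (by simp [hvw, CharTwo.add_self_eq_zero])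

theorem existsUnique_vadd_subset_quadric [Finite V] (hQ : YieldsForm B Q)
    (hmaj : Nat.card V < 2 * (quadric Q).ncard) (hL : IsLagrangian B L) :
    ∃! C : Set V, (∃ v : V, C = v +ᵥ (L : Set V)) ∧ C ⊆ quadric Q := by
  obtain ⟨v, hv⟩ := hQ.exists_vadd_subset_quadric hmaj hL.le_orthogonal
  refine ⟨v +ᵥ (L : Set V), ⟨⟨v, rfl⟩, hv⟩, ?_⟩
  rintro _ ⟨⟨w, rfl⟩, hw⟩
  exact hQ.vadd_eq_of_subset_quadric hL hw hv

theorem exists_singular_mem_orthogonal_notMem [Finite V] (hQ : YieldsForm B Q)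
    (hmaj : Nat.card V < 2 * (quadric Q).ncard) (hS : (S : Set V) ⊆ quadric Q)
    (hne : ∃ a ∈ B.orthogonal S, a ∉ S) : ∃ a ∈ B.orthogonal S, a ∉ S ∧ Q a = 0 := by
  obtain ⟨u, hu, huS⟩ := hne
  have hS_iso := hQ.le_orthogonal_of_subset_quadric hS
  obtain ⟨w, hw⟩ := hQ.exists_vadd_subset_quadric hmaj
    (sup_span_singleton_le_orthogonal hQ.isAlt hS_iso hu)
  obtain ⟨hQw, hQ_eq⟩ := hQ.vadd_subset_quadric_iff.1 hw
  have hw_orth : w ∈ B.orthogonal S := fun x hx =>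
    hQ.isAlt.isRefl _ _ ((hQ_eq x (Submodule.mem_sup_left hx)).symm.trans (hS hx))
  by_cases hwS : w ∈ S
  · refine ⟨w + u, add_mem hw_orth hu, fun h => huS ((S.add_mem_iff_right hwS).1 h), ?_⟩
    exact hw ⟨u, mem_sup_span_singleton_self S u, rfl⟩
  · exact ⟨w, hw_orth, hwS, hQw⟩

theorem exists_singular_pair_mem_orthogonal [Finite V] (hQ : YieldsForm B Q) (hB : IsSymplectic B)
    (hmaj : Nat.card V < 2 * (quadric Q).ncard) (hS : (S : Set V) ⊆ quadric Q)
    (hne : ∃ a ∈ B.orthogonal S, a ∉ S) :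
    ∃ a ∈ B.orthogonal S, ∃ b ∈ B.orthogonal S, B a b = 1 ∧ Q a = 0 ∧ Q b = 0 := by
  obtain ⟨a, ha, haS, hQa⟩ := hQ.exists_singular_mem_orthogonal_notMem hmaj hS hne
  obtain ⟨b, hb, hab_ne⟩ := hB.exists_mem_orthogonal_apply_ne_zero haS
  have hab : B a b = 1 := zmod_two_eq_one_of_ne_zero hab_ne
  by_cases hQb : Q b = 0
  · exact ⟨a, ha, b, hb, hab, hQa, hQb⟩
  · refine ⟨a, ha, a + b, add_mem ha hb, by simp [hab, hB.isAlt.self_eq_zero], hQa, ?_⟩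
    rw [hQ.map_add, hQa, zmod_two_eq_one_of_ne_zero hQb, hab]
    rfl

theorem ncard_setOf_isLagrangian_ge_subset_quadric [Finite V] (hQ : YieldsForm B Q)
    (hB : IsSymplectic B) (hmaj : Nat.card V < 2 * (quadric Q).ncard)
    (hS : (S : Set V) ⊆ quadric Q)
    (hdim : 2 * (Module.finrank (ZMod 2) S + 1) = Module.finrank (ZMod 2) V) :
    {L | IsLagrangian B L ∧ S ≤ L ∧ (L : Set V) ⊆ quadric Q}.ncard = 2 := by
  have hS_iso := hQ.le_orthogonal_of_subset_quadric hS
  obtain ⟨a, ha, b, hb, hab, hQa, hQb⟩ :=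
    hQ.exists_singular_pair_mem_orthogonal hB hmaj hS (hB.exists_mem_orthogonal_notMem hdim)
  have hba : B b a = 1 := by rw [← hB.isAlt.neg_eq, hab]; rfl
  have lagrangians_eq := hB.setOf_isLagrangian_ge_eq hS_iso hdim ha hb (by simp [hab])
  have sup_a : S ⊔ ZMod 2 ∙ a ∈ {L | IsLagrangian B L ∧ S ≤ L} := lagrangians_eq.ge (.inl rfl)
  have sup_b : S ⊔ ZMod 2 ∙ b ∈ {L | IsLagrangian B L ∧ S ≤ L} :=
    lagrangians_eq.ge (.inr ⟨0, by simp⟩)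
  have sup_ne : S ⊔ ZMod 2 ∙ a ≠ S ⊔ ZMod 2 ∙ b := fun h =>
    one_ne_zero (hab.symm.trans (sup_b.1.apply_eq_zero_of_sup_span_singleton_eq h))
  refine Set.ncard_eq_two.2 ⟨_, _, sup_ne, Set.Subset.antisymm ?_ ?_⟩
  · rintro L ⟨hL, hSL, hLQ⟩
    obtain rfl | ⟨c, rfl⟩ := lagrangians_eq.le ⟨hL, hSL⟩
    · exact .inl rfl
    · have hQc : Q (b + c • a) = c := by simp [hQ.map_add, hQ.map_smul, hQa, hQb, hba]
      have hc : c = 0 := hQc.symm.trans (hLQ (mem_sup_span_singleton_self S _))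
      exact .inr (by simp [hc])
  · rintro _ (rfl | rfl)
    · exact ⟨sup_a.1, le_sup_left, (hQ.sup_span_singleton_subset_quadric_iff hS ha).2 hQa⟩
    · exact ⟨sup_b.1, le_sup_left, (hQ.sup_span_singleton_subset_quadric_iff hS hb).2 hQb⟩

end YieldsForm

end QuadraticForm

/-- For a quadratic form of positive sign yielding `B`:
(i) every Lagrangian subspace has exactly one coset contained in the quadric;
(ii) every `(J−1)`-dimensional totally singular subspace is contained in
exactly three Lagrangian subspaces, exactly two of which lie in the quadric. -/
theorem positive_quadric_and_lagrangians
    {J : ℕ} (hJ : 0 < J)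
    {V : Type*} [AddCommGroup V] [Module (ZMod 2) V] [Fintype V] [DecidableEq V]
    (hdim : Module.finrank (ZMod 2) V = 2 * J)
    (B : V →ₗ[ZMod 2] V →ₗ[ZMod 2] ZMod 2) (hB : IsSymplectic B)
    (Q : V → ZMod 2) (hQ : YieldsForm B Q)
    (hpos : (quadric Q).ncard = 2 ^ (J - 1) * (2 ^ J + 1)) :
    (∀ L : Submodule (ZMod 2) V, IsLagrangian B L →
      ∃! C : Set V,
        (∃ v : V, C = (fun x => v + x) '' (L : Set V)) ∧ C ⊆ quadric Q) ∧
    (∀ S : Submodule (ZMod 2) V, Module.finrank (ZMod 2) ↥S = J - 1 →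
      (S : Set V) ⊆ quadric Q →
      {L : Submodule (ZMod 2) V | IsLagrangian B L ∧ S ≤ L}.ncard = 3 ∧
      {L : Submodule (ZMod 2) V | IsLagrangian B L ∧ S ≤ L ∧
        (L : Set V) ⊆ quadric Q}.ncard = 2) := by
  have hmaj : Nat.card V < 2 * (quadric Q).ncard := by
    have two_mul_pow : 2 * 2 ^ (J - 1) = 2 ^ J := mul_pow_sub_one hJ.ne' 2
    calc Nat.card V = 2 ^ (2 * J) := by
          rw [Module.natCard_eq_pow_finrank (K := ZMod 2), hdim, Nat.card_zmod]
      _ < 2 ^ J * (2 ^ J + 1) := by rw [two_mul, pow_add]; gcongr; lia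
      _ = 2 * (quadric Q).ncard := by rw [hpos, ← mul_assoc, two_mul_pow]
  refine ⟨fun L hL => hQ.existsUnique_vadd_subset_quadric hmaj hL, fun S hS hSQ => ?_⟩
  have hdimS : 2 * (Module.finrank (ZMod 2) S + 1) = Module.finrank (ZMod 2) V := by
    rw [hS, hdim, Nat.sub_add_cancel hJ]
  refine ⟨?_, hQ.ncard_setOf_isLagrangian_ge_subset_quadric hB hmaj hSQ hdimS⟩
  rw [hB.ncard_setOf_isLagrangian_ge (hQ.le_orthogonal_of_subset_quadric hSQ) hdimS, Nat.card_zmod]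
end
end
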